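/- There exist absolute constants 0 < c ≤ C such that for all x, y > 1 and t > 0 with xy ≤ t, one has c·E ≤ p₁(t,x,y) ≤ C·E, where E = ln x · ln y · ( ln(3t/(x+√t)) · ln(3t/(y+√t)) )^{−1} · t^{−1} · exp(−(x²+y²)/(2t)). -/

import Mathlib

open Real MeasureTheory

/-- Modified Bessel function of the first kind, order 0. -/
noncomputable def I0 (z : ℝ) : ℝ := ∑' n : ℕ, (z/2)^(2*n) / ((n.factorial : ℝ))^2

/-- Modified Bessel function of the first kind, order 1. -/
noncomputable def I1 (z : ℝ) : ℝ :=
  ∑' n : ℕ, (z/2)^(2*n+1) / ((n.factorial : ℝ) * ((n+1).factorial : ℝ))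

/-- Heat kernel of the Bessel operator `d²/dx² + (1/x) d/dx` on `(0,∞)`
with respect to the measure `y dy`. -/
noncomputable def pk (t x y : ℝ) : ℝ :=
  t⁻¹ * Real.exp (-(x^2 + y^2)/(2*t)) * I0 (x*y/t)

/-- The function `h` from (AC): Dirichlet heat kernel of `(1/2) d²/dx²` on `(1,∞)`
multiplied by `(xy)⁻¹`. -/
noncomputable def hker (t x y : ℝ) : ℝ :=
  (2*Real.pi*t)^(-(1:ℝ)/2) * (x*y)⁻¹ *
    (Real.exp (-(x-y)^2/(2*t)) - Real.exp (-(x+y-2)^2/(2*t)))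

/-- Bundled hypotheses on the Dirichlet heat kernel `p₁` of the Bessel operator on
`(1,∞)` and on the density `q` of the first hitting time of `1` by the
2-dimensional Bessel process. -/
structure BesselHK (p₁ : ℝ → ℝ → ℝ → ℝ) (q : ℝ → ℝ → ℝ) : Prop where
  meas_p₁ : Measurable fun z : ℝ × ℝ × ℝ => p₁ z.1 z.2.1 z.2.2
  meas_q : Measurable fun z : ℝ × ℝ => q z.1 z.2
  p₁_nonneg : ∀ ⦃t x y : ℝ⦄, 0 < t → 1 < x → 1 < y → 0 ≤ p₁ t x y
  q_nonneg : ∀ ⦃x s : ℝ⦄, 1 < x → 0 < s → 0 ≤ q x s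
  hunt : ∀ ⦃t x y : ℝ⦄, 0 < t → 1 < x → 1 < y →
    p₁ t x y = pk t x y - ∫ u in Set.Ioo 0 t, q x u * pk (t-u) 1 y
  symm : ∀ ⦃t x y : ℝ⦄, 0 < t → 1 < x → 1 < y → p₁ t x y = p₁ t y x
  ck : ∀ ⦃t s x y : ℝ⦄, 0 < t → 0 < s → 1 < x → 1 < y →
    p₁ (t+s) x y = ∫ w in Set.Ioi (1:ℝ), p₁ t x w * p₁ s w y * w
  mass : ∀ ⦃t x : ℝ⦄, 0 < t → 1 < x →
    (∫ y in Set.Ioi (1:ℝ), p₁ t x y * y) = ∫ u in Set.Ioi t, q x u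
  q1 : ∃ c C : ℝ, 0 < c ∧ c ≤ C ∧ ∀ ⦃x s : ℝ⦄, 1 < x → 0 < s →
    ((s < 2*x →
      c * (((x-1)/Real.sqrt x) * s^(-(3:ℝ)/2) * Real.exp (-(x-1)^2/(2*s))) ≤ q x s ∧
      q x s ≤ C * (((x-1)/Real.sqrt x) * s^(-(3:ℝ)/2) * Real.exp (-(x-1)^2/(2*s)))) ∧
     (2*x ≤ s →
      c * (((x-1)/x) * ((1+Real.log x)/((1+Real.log (s+x))*(1+Real.log (1+s/x)))) *
        s⁻¹ * Real.exp (-(x-1)^2/(2*s))) ≤ q x s ∧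
      q x s ≤ C * (((x-1)/x) * ((1+Real.log x)/((1+Real.log (s+x))*(1+Real.log (1+s/x)))) *
        s⁻¹ * Real.exp (-(x-1)^2/(2*s)))))
  q2 : ∀ ⦃x s : ℝ⦄, 1 < x → 0 < s →
    ((x-1)/Real.sqrt (2*Real.pi*x)) * s^(-(3:ℝ)/2) * Real.exp (-(x-1)^2/(2*s)) ≤ q x s
  surv : ∃ c' C' : ℝ, 0 < c' ∧ c' ≤ C' ∧ ∀ ⦃t x : ℝ⦄, 0 < t → 1 < x →
    c' * min 1 (Real.log x / Real.log (1+Real.sqrt t)) ≤ (∫ u in Set.Ioi t, q x u) ∧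
    (∫ u in Set.Ioi t, q x u) ≤ C' * min 1 (Real.log x / Real.log (1+Real.sqrt t))
  ac : ∀ ⦃t x y : ℝ⦄, 0 < t → 1 < x → 1 < y →
    Real.sqrt (x*y) * hker t x y ≤ p₁ t x y ∧
    p₁ t x y ≤ Real.exp (t/8) * Real.sqrt (x*y) * hker t x y

section Part1
lemma I0_summable (z : ℝ) : Summable (fun n : ℕ => (z/2)^(2*n) / ((n.factorial : ℝ))^2) := by
  refine Summable.of_nonneg_of_le (fun n => ?_) (fun n => ?_) (Real.summable_pow_div_factorial ((z/2)^2))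
  · rw [pow_mul]; positivity
  · rw [pow_mul]
    have h1 : (1:ℝ) ≤ n.factorial := by exact_mod_cast Nat.one_le_iff_ne_zero.mpr (Nat.factorial_ne_zero n)
    apply div_le_div_of_nonneg_left (by positivity) (by positivity)
    nlinarith

lemma I0_term_nonneg (z : ℝ) (n : ℕ) : 0 ≤ (z/2)^(2*n) / ((n.factorial : ℝ))^2 := by
  rw [pow_mul]; positivity

lemma I0_ge_one (z : ℝ) : 1 ≤ I0 z := by
  have := (I0_summable z).le_tsum 0 (fun n _ => I0_term_nonneg z n)
  simpa [I0] using this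

lemma I0_zero : I0 0 = 1 := by
  unfold I0
  rw [tsum_eq_single 0]
  · simp
  · intro n hn; simp [hn]

lemma I0_mono {z z' : ℝ} (hz : 0 ≤ z) (h : z ≤ z') : I0 z ≤ I0 z' := by
  unfold I0
  apply (I0_summable z).tsum_le_tsum _ (I0_summable z')
  intro n
  gcongr

lemma I0_lower {z y : ℝ} (hy : 1 ≤ y) :
    (y^2-1) * z^2/4 ≤ I0 (y*z) - I0 z := by
  unfold I0
  rw [← (I0_summable (y*z)).tsum_sub (I0_summable z)]
  have hs := (I0_summable (y*z)).sub (I0_summable z)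
  have := hs.le_tsum 1 (fun n _ => by
    have h1 : (y*z/2)^(2*n) = y^(2*n) * (z/2)^(2*n) := by rw [← mul_pow]; ring
    have h2 : 1 ≤ y^(2*n) := one_le_pow₀ hy
    have h3 := I0_term_nonneg z n
    rw [h1, mul_div_assoc]
    nlinarith)
  refine le_trans (le_of_eq ?_) this
  simp; ring

lemma I0_upper {z y : ℝ} (hy : 1 ≤ y) :
    I0 (y*z) - I0 z ≤ (y^2-1) * z^2/4 * I0 (y*z) := by
  unfold I0
  rw [← (I0_summable (y*z)).tsum_sub (I0_summable z), ← tsum_mul_left]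
  have hs := (I0_summable (y*z)).sub (I0_summable z)
  rw [hs.tsum_eq_zero_add]
  simp only [mul_zero, pow_zero, Nat.factorial_zero, Nat.cast_one, one_pow, sub_self, zero_add]
  apply ((summable_nat_add_iff 1).2 hs).tsum_le_tsum _ ((I0_summable (y*z)).mul_left _)
  intro n
  have h1 : (y*z/2)^(2*n) = (y^2)^n * (z/2)^(2*n) := by rw [← pow_mul, ← mul_pow]; ring
  have h1' : (y*z/2)^(2*(n+1)) = (y^2)^(n+1) * (z/2)^(2*(n+1)) := by rw [← pow_mul, ← mul_pow]; ring
  have hf : (((n+1).factorial : ℕ) : ℝ) = (n+1) * n.factorial := by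
    rw [Nat.factorial_succ]; push_cast; ring
  have h4 : (z/2)^(2*(n+1)) = (z/2)^(2*n) * (z^2/4) := by ring
  have hb : (y^2)^(n+1) - 1 ≤ (n+1) * ((y^2-1) * (y^2)^n) := by
    set a := y^2 with ha
    have ha1 : 1 ≤ a := one_le_pow₀ hy
    clear_value a
    clear h1 h1' hf h4 hs ha
    induction n with
    | zero => simp
    | succ k ih =>
      have e1 : 1 ≤ a^(k+1) := one_le_pow₀ ha1
      have ih' := ih
      have : a^(k+1+1) - 1 = (a^(k+1) - 1) + (a-1)*a^(k+1) := by ring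
      rw [this]
      have h5 : (a-1)*a^k ≤ (a-1)*a^(k+1) := by
        apply mul_le_mul_of_nonneg_left _ (by linarith)
        exact pow_le_pow_right₀ ha1 (by omega)
      push_cast
      have h6 : ((k:ℝ)+1)*((a-1)*a^k) ≤ (k+1)*((a-1)*a^(k+1)) := by gcongr
      linarith
  rw [h1, h1', hf, h4]
  have hT := I0_term_nonneg z n
  have hn : (0:ℝ) < n.factorial := by positivity
  have hn1 : (0:ℝ) < (n:ℝ)+1 := by positivity
  have e : (y^2)^(n+1) * ((z/2)^(2*n) * (z^2/4)) / (((n:ℝ)+1) * n.factorial)^2 - (z/2)^(2*n) * (z^2/4) / (((n:ℝ)+1) * n.factorial)^2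
     = ((z/2)^(2*n) / (n.factorial:ℝ)^2 * (z^2/4)) * (((y^2)^(n+1) - 1) / ((n:ℝ)+1)^2) := by
    field_simp
  rw [e]
  have e2 : (y^2-1) * z^2/4 * ((y^2)^n * (z/2)^(2*n) / (n.factorial:ℝ)^2) = ((z/2)^(2*n) / (n.factorial:ℝ)^2 * (z^2/4)) * ((y^2-1) * (y^2)^n) := by
    ring
  rw [e2]
  apply mul_le_mul_of_nonneg_left _ (by positivity)
  rw [div_le_iff₀ (by positivity)]
  have h7 : 0 ≤ (y^2-1) * (y^2)^n := by
    have : 1 ≤ y^2 := one_le_pow₀ hy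
    have : 0 ≤ y^2 - 1 := by linarith
    positivity
  have hn0 : (0:ℝ) ≤ n := Nat.cast_nonneg n
  nlinarith [mul_nonneg h7 hn0, mul_nonneg (mul_nonneg h7 hn0) hn0]

lemma I1_summable (z : ℝ) : Summable (fun n : ℕ => (z/2)^(2*n+1) / ((n.factorial : ℝ) * ((n+1).factorial : ℝ))) := by
  have := ((Real.summable_pow_div_factorial ((z/2)^2)).mul_left |z/2|)
  refine Summable.of_norm_bounded this (fun n => ?_)
  rw [norm_div, Real.norm_eq_abs, pow_succ, pow_mul, abs_mul, abs_of_nonneg (by positivity : 0 ≤ ((z/2)^2)^n), Real.norm_eq_abs, abs_of_nonneg (by positivity : (0:ℝ) ≤ (n.factorial : ℝ) * ((n+1).factorial : ℝ)), mul_comm, mul_div_assoc]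
  have h1 : (1:ℝ) ≤ (n+1).factorial := by exact_mod_cast Nat.one_le_iff_ne_zero.mpr (Nat.factorial_ne_zero (n+1))
  have hn : (0:ℝ) < n.factorial := by positivity
  gcongr
  nlinarith

lemma I0_hasDerivAt (z : ℝ) : HasDerivAt I0 (I1 z) z := by
  set R := |z| + 1
  have hzR : z ∈ Metric.ball (0:ℝ) R := by simp [R]
  have key := hasDerivAt_tsum_of_isPreconnected (𝕜 := ℝ) (F := ℝ)
    (g := fun (n:ℕ) (z:ℝ) => (z/2)^(2*n) / ((n.factorial : ℝ))^2)
    (g' := fun (n:ℕ) (z:ℝ) => (2*n : ℕ) * (z/2)^(2*n-1) * (1/2) / ((n.factorial : ℝ))^2)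
    (u := fun (n:ℕ) => (2*n : ℕ) * (R/2)^(2*n-1) * (1/2) / ((n.factorial : ℝ))^2)
    (t := Metric.ball 0 R) (y₀ := 0) (y := z) ?_ Metric.isOpen_ball
    ((convex_ball (0:ℝ) R).isPreconnected) ?_ ?_ (by simp [R]; positivity) (I0_summable 0) hzR
  · have e : ∑' n : ℕ, ((2*n : ℕ):ℝ) * (z/2)^(2*n-1) * (1/2) / ((n.factorial : ℝ))^2 = I1 z := by
      unfold I1
      have hs : ∀ n : ℕ, ((2*(n+1) : ℕ):ℝ) * (z/2)^(2*(n+1)-1) * (1/2) / (((n+1).factorial : ℝ))^2 = (z/2)^(2*n+1) / ((n.factorial : ℝ) * ((n+1).factorial : ℝ)) := by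
        intro n
        rw [show 2*(n+1)-1 = 2*n+1 by omega, Nat.factorial_succ]
        push_cast
        have hn : (0:ℝ) < n.factorial := by positivity
        field_simp
      rw [Summable.tsum_eq_zero_add]
      · simp only [hs]; simp
      · rw [← summable_nat_add_iff 1]
        simp only [hs]; exact I1_summable z
    rw [← e]; exact key
  · have hs : ∀ n : ℕ, ((2*(n+1) : ℕ):ℝ) * (R/2)^(2*(n+1)-1) * (1/2) / (((n+1).factorial : ℝ))^2 = (R/2)^(2*n+1) / ((n.factorial : ℝ) * ((n+1).factorial : ℝ)) := by
      intro n
      rw [show 2*(n+1)-1 = 2*n+1 by omega, Nat.factorial_succ]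
      push_cast
      have hn : (0:ℝ) < n.factorial := by positivity
      field_simp
    rw [← summable_nat_add_iff 1]
    simp only [hs]; exact I1_summable R
  · intro n y _
    have := ((hasDerivAt_id y).div_const 2).pow (2*n) |>.div_const ((n.factorial : ℝ)^2)
    simpa using this
  · intro n y hy
    have hy' : |y| ≤ R := by
      have := Metric.mem_ball.1 hy; simp at this; exact this.le
    rw [norm_div, norm_mul, norm_mul, norm_pow, norm_div]
    simp only [Real.norm_eq_abs, Nat.abs_cast]
    rw [abs_of_nonneg (by positivity : (0:ℝ) ≤ (n.factorial:ℝ)^2), abs_of_nonneg (by norm_num : (0:ℝ) ≤ 1/2), abs_of_nonneg (by norm_num : (0:ℝ) ≤ 2)]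
    gcongr

lemma I0_continuous : Continuous I0 :=
  continuous_iff_continuousAt.2 (fun z => (I0_hasDerivAt z).continuousAt)

lemma I1_le_I0 (z : ℝ) : I1 z ≤ I0 z := by
  have hs := I0_summable z
  have hs1 := (summable_nat_add_iff 1).2 hs
  have e : I0 z = 1 + ∑' n : ℕ, (z/2)^(2*(n+1)) / (((n+1).factorial : ℝ))^2 := by
    unfold I0; rw [hs.tsum_eq_zero_add]; simp
  have h : I1 z ≤ ∑' n : ℕ, (1/2) * ((z/2)^(2*n) / ((n.factorial : ℝ))^2 + (z/2)^(2*(n+1)) / (((n+1).factorial : ℝ))^2) := by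
    unfold I1
    apply (I1_summable z).tsum_le_tsum _ ((hs.add hs1).mul_left _)
    intro n
    have hn : (0:ℝ) < n.factorial := by positivity
    have hn' : (0:ℝ) < (n+1).factorial := by positivity
    have := sq_nonneg ((z/2)^n / (n.factorial:ℝ) - (z/2)^(n+1) / ((n+1).factorial:ℝ))
    have e1 : (z/2)^(2*n) / ((n.factorial : ℝ))^2 = ((z/2)^n / (n.factorial:ℝ))^2 := by ring
    have e2 : (z/2)^(2*(n+1)) / (((n+1).factorial : ℝ))^2 = ((z/2)^(n+1) / ((n+1).factorial:ℝ))^2 := by ring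
    have e3 : (z/2)^(2*n+1) / ((n.factorial : ℝ) * ((n+1).factorial : ℝ)) = ((z/2)^n / (n.factorial:ℝ)) * ((z/2)^(n+1) / ((n+1).factorial:ℝ)) := by
      rw [div_mul_div_comm]; congr 1; ring
    rw [e1, e2, e3]; linarith
  rw [tsum_mul_left, hs.tsum_add hs1] at h
  have e' : I0 z = ∑' n : ℕ, (z/2)^(2*n) / ((n.factorial : ℝ))^2 := rfl
  linarith

lemma I0_ratio {z z' : ℝ} (h : z ≤ z') : I0 z' ≤ exp (z' - z) * I0 z := by
  have hanti : Antitone (fun z => exp (-z) * I0 z) := by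
    apply antitone_of_hasDerivAt_nonpos (f' := fun z => -exp (-z) * I0 z + exp (-z) * I1 z)
    · intro z
      have h1 : HasDerivAt (fun z : ℝ => exp (-z)) (-exp (-z)) z := by
        simpa using (hasDerivAt_neg z).exp
      exact h1.mul (I0_hasDerivAt z)
    · intro z
      have := I1_le_I0 z
      have := exp_pos (-z)
      simp only [Pi.zero_apply]
      nlinarith
  have := hanti h
  simp only at this
  have e : exp (z'-z) * I0 z = exp z' * (exp (-z) * I0 z) := by
    rw [← mul_assoc, ← exp_add]; ring_nf
  have e2 : I0 z' = exp z' * (exp (-z') * I0 z') := by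
    rw [← mul_assoc, ← exp_add]; simp
  rw [e, e2]
  gcongr

lemma I0_le_exp {z : ℝ} (h : 0 ≤ z) : I0 z ≤ exp z := by
  have := I0_ratio h
  simpa [I0_zero] using this
end Part1

section Part2
noncomputable def gs (t z : ℝ) : ℝ := (2*Real.pi*t)^(-(1:ℝ)/2) * exp (-z^2/(2*t))

lemma gs_eq {t : ℝ} (ht : 0 < t) (c y : ℝ) :
    gs t (y - c) = ProbabilityTheory.gaussianPDFReal c t.toNNReal y := by
  unfold gs ProbabilityTheory.gaussianPDFReal
  rw [Real.coe_toNNReal t ht.le, show (-(1:ℝ)/2) = -(1/2) by norm_num, Real.rpow_neg (by positivity), ← Real.sqrt_eq_rpow]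

lemma gs_nonneg {t : ℝ} (ht : 0 < t) (z : ℝ) : 0 ≤ gs t z := by
  unfold gs; positivity

lemma gs_integrable {t : ℝ} (ht : 0 < t) (c : ℝ) : Integrable (fun y => gs t (y - c)) := by
  simp only [gs_eq ht c]
  exact ProbabilityTheory.integrable_gaussianPDFReal _ _

lemma gs_integral {t : ℝ} (ht : 0 < t) (c : ℝ) : ∫ y, gs t (y - c) = 1 := by
  simp only [gs_eq ht c]
  apply ProbabilityTheory.integral_gaussianPDFReal_eq_one
  exact (Real.toNNReal_pos.2 ht).ne'

lemma gs_integral_sq {t : ℝ} (ht : 0 < t) (c : ℝ) : ∫ y, (y-c)^2 * gs t (y - c) = t := by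
  have hv : t.toNNReal ≠ 0 := (Real.toNNReal_pos.2 ht).ne'
  have h := ProbabilityTheory.variance_fun_id_gaussianReal (μ := c) (v := t.toNNReal)
  rw [ProbabilityTheory.variance_eq_integral (by fun_prop), ProbabilityTheory.integral_gaussianReal_eq_integral_smul hv,
    ProbabilityTheory.integral_id_gaussianReal] at h
  simp only [smul_eq_mul] at h
  simp only [gs_eq ht c]
  rw [Real.coe_toNNReal t ht.le] at h
  refine Eq.trans ?_ h
  congr 1; ext y; exact mul_comm _ _

lemma gs_integrable_sq {t : ℝ} (ht : 0 < t) (c : ℝ) : Integrable (fun y => (y-c)^2 * gs t (y - c)) := by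
  by_contra h
  have := gs_integral_sq ht c
  rw [integral_undef h] at this
  linarith

lemma ac_weight {x y : ℝ} (hx : 0 < x) (hy : 0 < y) :
    √(x*y) * (x*y)⁻¹ * y = √(y/x) := by
  rw [Real.sqrt_mul hx.le, Real.sqrt_div hy.le]
  have h1 : √x ≠ 0 := by positivity
  have h2 := Real.mul_self_sqrt hx.le
  rw [mul_inv]
  field_simp
  nlinarith

lemma ac_form {t x y : ℝ} (hx : 0 < x) (hy : 0 < y) :
    √(x*y) * hker t x y * y = √(y/x) * (gs t (y-x) - gs t (y-(2-x))) := by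
  rw [← ac_weight hx hy]
  unfold hker gs
  rw [show (y-(2-x)) = x+y-2 by ring, show (y-x)^2 = (x-y)^2 by ring]
  ring

variable {p₁ : ℝ → ℝ → ℝ → ℝ} {q : ℝ → ℝ → ℝ}

lemma p1_pos (H : BesselHK p₁ q) {t x y : ℝ} (ht : 0 < t) (hx : 1 < x) (hy : 1 < y) : 0 < p₁ t x y := by
  refine lt_of_lt_of_le ?_ (H.ac ht hx hy).1
  unfold hker
  have : 0 < exp (-(x-y)^2/(2*t)) - exp (-(x+y-2)^2/(2*t)) := by
    rw [sub_pos]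
    apply exp_lt_exp.2
    apply div_lt_div_of_pos_right _ (by positivity)
    nlinarith [mul_pos (sub_pos.2 hx) (sub_pos.2 hy)]
  have hx0 : 0 < x := by linarith
  have hy0 : 0 < y := by linarith
  positivity

lemma m_pos {t x : ℝ} (ht : 0 < t) (hx : 1 < x) : 0 < min 1 (Real.log x / Real.log (1+Real.sqrt t)) := by
  have h1 : 0 < Real.log x := Real.log_pos hx
  have h2 : 0 < Real.log (1+Real.sqrt t) := Real.log_pos (by have := Real.sqrt_pos.2 ht; linarith)
  exact lt_min one_pos (by positivity)

lemma S_pos (H : BesselHK p₁ q) {t x : ℝ} (ht : 0 < t) (hx : 1 < x) : 0 < ∫ u in Set.Ioi t, q x u := by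
  obtain ⟨c, C, hc, -, h⟩ := H.surv
  exact lt_of_lt_of_le (mul_pos hc (m_pos ht hx)) (h ht hx).1

lemma q_intOn (H : BesselHK p₁ q) {t x : ℝ} (ht : 0 < t) (hx : 1 < x) : IntegrableOn (q x) (Set.Ioi t) := by
  by_contra h
  have := S_pos H ht hx
  rw [integral_undef h] at this
  exact lt_irrefl _ this

lemma p1_intOn (H : BesselHK p₁ q) {t x : ℝ} (ht : 0 < t) (hx : 1 < x) : IntegrableOn (fun y => p₁ t x y * y) (Set.Ioi 1) := by
  by_contra h
  have := S_pos H ht hx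
  rw [← H.mass ht hx, integral_undef h] at this
  exact lt_irrefl _ this

lemma seq_tendsto : Filter.Tendsto (fun n : ℕ => 1/((n:ℝ)+1)) Filter.atTop (nhds 0) :=
  tendsto_one_div_add_atTop_nhds_zero_nat

lemma q_intOn0 (H : BesselHK p₁ q) {x : ℝ} (hx : 1 < x) : IntegrableOn (q x) (Set.Ioi 0) := by
  have hcov : AECover (volume.restrict (Set.Ioi (0:ℝ))) Filter.atTop (fun n : ℕ => Set.Ioi (1/((n:ℝ)+1))) :=
    aecover_Ioi_of_Ioi seq_tendsto
  obtain ⟨c, C, hc, hcC, h⟩ := H.surv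
  have hsub : ∀ n : ℕ, Set.Ioi (1/((n:ℝ)+1)) ∩ Set.Ioi 0 = Set.Ioi (1/((n:ℝ)+1)) := by
    intro n
    apply Set.inter_eq_left.2
    apply Set.Ioi_subset_Ioi; positivity
  refine hcov.integrable_of_integral_bounded_of_nonneg_ae C (fun n => ?_) ?_ ?_
  · rw [IntegrableOn, Measure.restrict_restrict measurableSet_Ioi, hsub]
    exact q_intOn H (by positivity) hx
  · exact (ae_restrict_mem measurableSet_Ioi).mono (fun u hu => H.q_nonneg hx hu)
  · refine Filter.Eventually.of_forall (fun n => ?_)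
    rw [Measure.restrict_restrict measurableSet_Ioi, hsub]
    refine (h (by positivity) hx).2.trans ?_
    have : min 1 (Real.log x / Real.log (1+Real.sqrt (1/((n:ℝ)+1)))) ≤ 1 := min_le_left _ _
    nlinarith

lemma S_tendsto (H : BesselHK p₁ q) {x : ℝ} (hx : 1 < x) :
    Filter.Tendsto (fun n : ℕ => ∫ u in Set.Ioi (1/((n:ℝ)+1)), q x u) Filter.atTop (nhds (∫ u in Set.Ioi 0, q x u)) := by
  have hcov : AECover (volume.restrict (Set.Ioi (0:ℝ))) Filter.atTop (fun n : ℕ => Set.Ioi (1/((n:ℝ)+1))) :=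
    aecover_Ioi_of_Ioi seq_tendsto
  have hsub : ∀ n : ℕ, Set.Ioi (1/((n:ℝ)+1)) ∩ Set.Ioi 0 = Set.Ioi (1/((n:ℝ)+1)) := by
    intro n
    apply Set.inter_eq_left.2
    apply Set.Ioi_subset_Ioi; positivity
  have := hcov.integral_tendsto_of_countably_generated (q_intOn0 H hx)
  simpa only [Measure.restrict_restrict measurableSet_Ioi, hsub] using this

lemma am_gm_eta {η a : ℝ} (hη : 0 < η) : |a| ≤ (η + a^2/η)/2 := by
  have : 0 ≤ (η - |a|)^2/η := by positivity
  have h2 : (η - |a|)^2/η = η - 2*|a| + a^2/η := by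
    have := sq_abs a
    field_simp
    nlinarith
  linarith

lemma S_upper (H : BesselHK p₁ q) {t x : ℝ} (ht : 0 < t) (hx : 1 < x) :
    ∫ u in Set.Ioi t, q x u ≤ exp (t/8) * (1 + √t/(2*x)) := by
  rw [← H.mass ht hx]
  have hx0 : 0 < x := by linarith
  have hs : 0 < √t := Real.sqrt_pos.2 ht
  set A := 1 + √t/(4*x)
  set B := 1/(4*x*√t)
  have hi : Integrable (fun y => exp (t/8) * (A * gs t (y-x) + B * ((y-x)^2 * gs t (y-x)))) :=
    (((gs_integrable ht x).const_mul A).add ((gs_integrable_sq ht x).const_mul B)).const_mul _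
  have hnn : ∀ y, 0 ≤ exp (t/8) * (A * gs t (y-x) + B * ((y-x)^2 * gs t (y-x))) := by
    intro y
    have := gs_nonneg ht (y-x)
    positivity
  calc ∫ y in Set.Ioi (1:ℝ), p₁ t x y * y ≤ ∫ y in Set.Ioi (1:ℝ), exp (t/8) * (A * gs t (y-x) + B * ((y-x)^2 * gs t (y-x))) := by
        apply setIntegral_mono_on (p1_intOn H ht hx) hi.integrableOn measurableSet_Ioi
        intro y hy
        have hy1 : 1 < y := hy
        have hy0 : 0 < y := by linarith
        have h1 := (H.ac ht hx hy1).2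
        have h2 : p₁ t x y * y ≤ exp (t/8) * (√(x*y) * hker t x y * y) := by
          calc _ ≤ (exp (t/8) * √(x*y) * hker t x y) * y := by gcongr
            _ = _ := by ring
        rw [ac_form hx0 hy0] at h2
        refine h2.trans ?_
        have g1 := gs_nonneg ht (y-x)
        have g2 := gs_nonneg ht (y-(2-x))
        have hw : √(y/x) ≤ A + B * (y-x)^2 := by
          have e1 : √(y/x) ≤ (1 + y/x)/2 := by
            have := Real.mul_self_sqrt (by positivity : 0 ≤ y/x)
            nlinarith [sq_nonneg (√(y/x) - 1)]
          have e2 := le_trans (le_abs_self _) (am_gm_eta (a := y-x) hs)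
          have e3 : (1+y/x)/2 = 1 + (y-x)/(2*x) := by field_simp; ring
          have e4 : A + B*(y-x)^2 = 1 + ((√t + (y-x)^2/√t)/2)/(2*x) := by
            simp only [A, B]; field_simp; ring
          rw [e4]; refine e1.trans ?_; rw [e3]; gcongr
        have h3 : √(y/x) * (gs t (y-x) - gs t (y-(2-x))) ≤ (A + B*(y-x)^2) * gs t (y-x) := by
          have := Real.sqrt_nonneg (y/x)
          calc _ ≤ √(y/x) * gs t (y-x) := by gcongr; linarith
            _ ≤ _ := by gcongr
        calc _ ≤ exp (t/8) * ((A + B*(y-x)^2) * gs t (y-x)) := by gcongr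
          _ = _ := by ring
    _ ≤ ∫ y, exp (t/8) * (A * gs t (y-x) + B * ((y-x)^2 * gs t (y-x))) :=
        setIntegral_le_integral hi (Filter.Eventually.of_forall hnn)
    _ = exp (t/8) * (A * 1 + B * t) := by
        rw [integral_const_mul, integral_add ((gs_integrable ht x).const_mul A) ((gs_integrable_sq ht x).const_mul B), integral_const_mul, integral_const_mul, gs_integral ht, gs_integral_sq ht]
    _ = _ := by
        have : B * t = √t/(4*x) := by
          simp only [B]
          have := Real.mul_self_sqrt ht.le
          field_simp; nlinarith
        rw [this]; simp only [A]; ring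

lemma S_lower (H : BesselHK p₁ q) {x : ℝ} (hx : 1 < x) :
    ∃ D : ℝ, ∀ t : ℝ, 0 < t → 1 - D * (t + √t) ≤ ∫ u in Set.Ioi t, q x u := by
  have hx0 : 0 < x := by linarith
  have ha : 0 < x - 1 := by linarith
  set k := 1/(2*x^2) + 1/(x-1)^2
  set B' := (3/(x-1)^2 + 1/(x-1))/2
  refine ⟨1/(2*x) + k + B', fun t ht => ?_⟩
  have hs : 0 < √t := Real.sqrt_pos.2 ht
  rw [← H.mass ht hx]
  set A := 1 - √t/(4*x)
  set B := 1/(4*x*√t) + k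
  have hB' : 0 ≤ B' := by positivity
  have hk : 0 ≤ k := by positivity
  have hi1 : Integrable (fun y => A * gs t (y-x) - B * ((y-x)^2 * gs t (y-x))) :=
    (((gs_integrable ht x).const_mul A).sub ((gs_integrable_sq ht x).const_mul B))
  have hi2 : Integrable (fun y => B' * ((y-(2-x))^2 * gs t (y-(2-x)))) :=
    ((gs_integrable_sq ht (2-x)).const_mul B')
  have hm : ∫ y in Set.Ioi (1:ℝ), ((A * gs t (y-x) - B * ((y-x)^2 * gs t (y-x))) - B' * ((y-(2-x))^2 * gs t (y-(2-x)))) ≤ ∫ y in Set.Ioi (1:ℝ), p₁ t x y * y := by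
    apply setIntegral_mono_on (hi1.sub hi2).integrableOn (p1_intOn H ht hx) measurableSet_Ioi
    intro y hy
    have hy1 : 1 < y := hy
    have hy0 : 0 < y := by linarith
    have h1 := (H.ac ht hx hy1).1
    have h2 : √(x*y) * hker t x y * y ≤ p₁ t x y * y := by gcongr
    rw [ac_form hx0 hy0] at h2
    refine le_trans ?_ h2
    have g1 := gs_nonneg ht (y-x)
    have g2 := gs_nonneg ht (y-(2-x))
    have hsq := Real.mul_self_sqrt (by positivity : 0 ≤ y/x)
    have hsn := Real.sqrt_nonneg (y/x)
    have w1 : A - B*(y-x)^2 ≤ √(y/x) := by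
      have e1 : 1 + (y/x-1)/2 - (y/x-1)^2/2 ≤ √(y/x) := by
        set u := √(y/x)
        rw [← hsq]
        nlinarith [mul_nonneg (sq_nonneg (u-1)) hsn, mul_nonneg (mul_nonneg (sq_nonneg (u-1)) hsn) hsn]
      have e2 := (neg_le_of_abs_le (am_gm_eta (a := y-x) hs))
      have e3 : 1 + (y/x-1)/2 - (y/x-1)^2/2 = 1 + (y-x)/(2*x) - 1/(2*x^2)*(y-x)^2 := by field_simp
      have e4 : A - B*(y-x)^2 = 1 + (-((√t + (y-x)^2/√t)/2))/(2*x) - 1/(2*x^2)*(y-x)^2 - 1/(x-1)^2*(y-x)^2 := by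
        simp only [A, B, k]; field_simp; ring
      have e5 : 0 ≤ 1/(x-1)^2*(y-x)^2 := by positivity
      have e6 : (-((√t + (y-x)^2/√t)/2))/(2*x) ≤ (y-x)/(2*x) := by gcongr
      linarith
    have w2 : √(y/x) ≤ B'*(y-(2-x))^2 := by
      have e1 : √(y/x) ≤ (1 + y/x)/2 := by
        nlinarith [sq_nonneg (√(y/x) - 1)]
      have e2 : y/x ≤ y := div_le_self hy0.le hx.le
      set Y := y-(2-x) with hY
      have hYa : x-1 ≤ Y := by rw [hY]; linarith
      have e3 : y ≤ Y + 2 := by rw [hY]; linarith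
      have e4 : 1 ≤ Y/(x-1) := by rw [le_div_iff₀ ha]; linarith
      have e5 : B'*Y^2 = (3*(Y/(x-1))^2 + Y*(Y/(x-1)))/2 := by
        simp only [B']; field_simp
      have hY0 : 0 < Y := by linarith
      rw [e5]
      nlinarith
    have i1 : (A - B*(y-x)^2) * gs t (y-x) ≤ √(y/x) * gs t (y-x) := by gcongr
    have i2 : √(y/x) * gs t (y-(2-x)) ≤ (B'*(y-(2-x))^2) * gs t (y-(2-x)) := by gcongr
    simp only [Pi.sub_apply]
    nlinarith
  refine le_trans ?_ hm
  rw [integral_sub hi1.integrableOn hi2.integrableOn]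
  have j2 : ∫ y in Set.Ioi (1:ℝ), B' * ((y-(2-x))^2 * gs t (y-(2-x))) ≤ B' * t := by
    refine (setIntegral_le_integral hi2 (Filter.Eventually.of_forall (fun y => ?_))).trans ?_
    · have g2 := gs_nonneg ht (y-(2-x))
      simp only [Pi.zero_apply]; positivity
    · rw [integral_const_mul, gs_integral_sq ht]
  have j1 : A - B*t ≤ ∫ y in Set.Ioi (1:ℝ), (A * gs t (y-x) - B * ((y-x)^2 * gs t (y-x))) := by
    have e : ∫ y, (A * gs t (y-x) - B * ((y-x)^2 * gs t (y-x))) = A - B*t := by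
      rw [integral_sub ((gs_integrable ht x).const_mul A) ((gs_integrable_sq ht x).const_mul B), integral_const_mul, integral_const_mul, gs_integral ht, gs_integral_sq ht, mul_one]
    rw [← e, ← integral_add_compl (measurableSet_Ioi (a := (1:ℝ))) hi1]
    have : ∫ y in (Set.Ioi (1:ℝ))ᶜ, (A * gs t (y-x) - B * ((y-x)^2 * gs t (y-x))) ≤ 0 := by
      apply setIntegral_nonpos measurableSet_Ioi.compl
      intro y hy
      have hy1 : y ≤ 1 := by simpa using hy
      have g1 := gs_nonneg ht (y-x)
      have : A - B*(y-x)^2 ≤ 0 := by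
        have e1 : A ≤ 1 := by
          have : 0 ≤ √t/(4*x) := by positivity
          simp only [A]; linarith
        have e2 : 1 ≤ 1/(x-1)^2 * (y-x)^2 := by
          rw [one_div, ← div_eq_inv_mul, le_div_iff₀ (by positivity)]
          nlinarith
        have e3 : B*(y-x)^2 = 1/(4*x*√t)*(y-x)^2 + 1/(2*x^2)*(y-x)^2 + 1/(x-1)^2 * (y-x)^2 := by
          simp only [B, k]; ring
        have e4 : 0 ≤ 1/(4*x*√t)*(y-x)^2 := by positivity
        have e5 : 0 ≤ 1/(2*x^2)*(y-x)^2 := by positivity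
        linarith
      have := mul_nonpos_of_nonpos_of_nonneg this g1
      nlinarith
    linarith
  have j3 : B*t = √t/(4*x) + k*t := by
    simp only [B]
    have := Real.mul_self_sqrt ht.le
    rw [add_mul]
    congr 1
    field_simp; nlinarith
  have j4 : √t/(4*x) + √t/(4*x) = 1/(2*x) * √t := by field_simp; norm_num
  have j5 : 0 ≤ 1/(2*x)*t := by positivity
  have j6 : 0 ≤ (k+B')*√t := by positivity
  have j7 : A - B*t - B'*t = 1 - 1/(2*x)*√t - (k + B')*t := by
    rw [j3, ← j4]; simp only [A]; ring
  linarith [j1, j2]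

lemma q_mass_one (H : BesselHK p₁ q) {x : ℝ} (hx : 1 < x) : ∫ u in Set.Ioi 0, q x u = 1 := by
  have h := S_tendsto H hx
  have hsq : Filter.Tendsto (fun n : ℕ => √(1/((n:ℝ)+1))) Filter.atTop (nhds 0) := by
    have := (Real.continuous_sqrt.tendsto 0).comp seq_tendsto
    rw [Real.sqrt_zero] at this
    exact this
  obtain ⟨D, hD⟩ := S_lower H hx
  apply le_antisymm
  · have hu : Filter.Tendsto (fun n : ℕ => exp ((1/((n:ℝ)+1))/8) * (1 + √(1/((n:ℝ)+1))/(2*x))) Filter.atTop (nhds (exp (0/8) * (1 + 0/(2*x)))) :=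
      ((Real.continuous_exp.tendsto _).comp (seq_tendsto.div_const 8)).mul ((hsq.div_const _).const_add 1)
    have := le_of_tendsto_of_tendsto' h hu (fun n => S_upper H (by positivity) hx)
    simpa using this
  · have hl : Filter.Tendsto (fun n : ℕ => 1 - D * ((1/((n:ℝ)+1)) + √(1/((n:ℝ)+1)))) Filter.atTop (nhds (1 - D * (0 + 0))) :=
      ((seq_tendsto.add hsq).const_mul D).const_sub 1
    have := le_of_tendsto_of_tendsto' hl h (fun n => hD _ (by positivity))
    simpa using this
end Part2

section Part3
noncomputable def mm (x t : ℝ) : ℝ := min 1 (Real.log x / Real.log (1+Real.sqrt t))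

lemma log1_pos {t : ℝ} (ht : 0 < t) : 0 < Real.log (1+Real.sqrt t) :=
  Real.log_pos (by have := Real.sqrt_pos.2 ht; linarith)

lemma mm_pos {x t : ℝ} (ht : 0 < t) (hx : 1 < x) : 0 < mm x t := m_pos ht hx

lemma mm_anti {x r s : ℝ} (hr : 0 < r) (hrs : r ≤ s) (hx : 1 < x) : mm x s ≤ mm x r := by
  unfold mm
  have h1 : 0 < Real.log x := Real.log_pos hx
  have h2 := log1_pos hr
  gcongr

lemma mm_scale {x r s : ℝ} (hr : 0 < r) (hrs : r ≤ s) (hx : 1 < x) : mm x r ≤ √(s/r) * mm x s := by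
  have hs : 0 < s := by linarith
  have hl : 1 ≤ √(s/r) := by
    rw [Real.one_le_sqrt, le_div_iff₀ hr]; linarith
  have h1 : 0 < Real.log x := Real.log_pos hx
  have h2 := log1_pos hr
  have h3 := log1_pos hs
  have hb : Real.log (1+√s) ≤ √(s/r) * Real.log (1+√r) := by
    have hr' := Real.sqrt_pos.2 hr
    have := one_add_mul_self_le_rpow_one_add (s := √r) (by linarith) hl
    have e : √(s/r) * √r = √s := by
      rw [← Real.sqrt_mul (by positivity)]; congr 1; field_simp
    rw [e] at this
    rw [← Real.log_rpow (by positivity)]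
    apply Real.log_le_log _ this
    have := Real.sqrt_nonneg s; linarith
  unfold mm
  rw [mul_min_of_nonneg _ _ (by positivity)]
  apply min_le_min
  · linarith
  · rw [div_le_iff₀ h2, mul_comm (√(s/r)), mul_assoc, div_mul_eq_mul_div, le_div_iff₀ h3]
    exact mul_le_mul_of_nonneg_left hb h1.le

variable {p₁ : ℝ → ℝ → ℝ → ℝ} {q : ℝ → ℝ → ℝ}

lemma int_sqrt {s : ℝ} (hs : 0 < s) : IntegrableOn (fun r => √(s/r)) (Set.Ioo 0 s) ∧
    ∫ r in Set.Ioo 0 s, √(s/r) = 2*s := by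
  have e : Set.EqOn (fun r => √(s/r)) (fun r => √s * r^(-(1/2):ℝ)) (Set.Ioo 0 s) := by
    intro r hr
    have hr0 : 0 < r := hr.1
    simp only
    rw [Real.sqrt_div hs.le, Real.rpow_neg hr0.le, ← Real.sqrt_eq_rpow]; rfl
  have hI : IntegrableOn (fun r : ℝ => r^(-(1/2):ℝ)) (Set.Ioo 0 s) := by
    rw [← integrableOn_Ioc_iff_integrableOn_Ioo, ← intervalIntegrable_iff_integrableOn_Ioc_of_le hs.le]
    exact intervalIntegral.intervalIntegrable_rpow' (by norm_num)
  refine ⟨(integrableOn_congr_fun e measurableSet_Ioo).2 (hI.const_mul _), ?_⟩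
  rw [setIntegral_congr_fun measurableSet_Ioo e, integral_const_mul, ← integral_Ioc_eq_integral_Ioo,
    ← intervalIntegral.integral_of_le hs.le, integral_rpow (Or.inl (by norm_num))]
  norm_num
  rw [← Real.sqrt_eq_rpow]
  have := Real.mul_self_sqrt hs.le
  nlinarith

lemma q_meas (H : BesselHK p₁ q) (x : ℝ) : Measurable (q x) :=
  H.meas_q.comp (measurable_const.prodMk measurable_id)

lemma moment (H : BesselHK p₁ q) {C' : ℝ} (hC0 : 0 ≤ C')
    (hC : ∀ ⦃t x : ℝ⦄, 0 < t → 1 < x → (∫ u in Set.Ioi t, q x u) ≤ C' * mm x t)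
    {y s : ℝ} (hy : 1 < y) (hs : 0 < s) :
    ∫ u in Set.Ioo 0 s, q y u * u ≤ 2 * C' * s * mm y s := by
  set μ := volume.restrict (Set.Ioo (0:ℝ) s)
  set ν := volume.restrict (Set.Ioi (0:ℝ))
  have hq : Integrable (q y) ν := q_intOn0 H hy
  set f : ℝ → ℝ → ℝ := fun r u => Set.indicator (Set.Ioi r) (q y) u with hf
  have hfm : Measurable (Function.uncurry f) := by
    have : Function.uncurry f = Set.indicator {p : ℝ × ℝ | p.1 < p.2} (fun p => q y p.2) := by
      ext p; simp [hf, Function.uncurry, Set.indicator]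
    rw [this]
    exact ((q_meas H y).comp measurable_snd).indicator (measurableSet_lt measurable_fst measurable_snd)
  have hg : Integrable (fun p : ℝ × ℝ => (1:ℝ) * q y p.2) (μ.prod ν) :=
    Integrable.mul_prod (integrable_const (1:ℝ)) hq
  have hfi : Integrable (Function.uncurry f) (μ.prod ν) := by
    refine hg.mono hfm.aestronglyMeasurable (Filter.Eventually.of_forall (fun p => ?_))
    simp only [Function.uncurry, hf, one_mul]
    exact norm_indicator_le_norm_self _ _
  have hswap := integral_integral_swap hfi
  have inner1 : ∀ r ∈ Set.Ioo (0:ℝ) s, ∫ u, f r u ∂ν = ∫ u in Set.Ioi r, q y u := by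
    intro r hr
    simp only [hf, ν]
    rw [integral_indicator measurableSet_Ioi, Measure.restrict_restrict measurableSet_Ioi,
      Set.inter_eq_left.2 (Set.Ioi_subset_Ioi hr.1.le)]
  have left_le : ∫ r, ∫ u, f r u ∂ν ∂μ ≤ 2 * C' * s * mm y s := by
    have hi := (int_sqrt hs).1
    calc ∫ r, ∫ u, f r u ∂ν ∂μ ≤ ∫ r in Set.Ioo 0 s, (C' * mm y s) * √(s/r) := by
          apply setIntegral_mono_on hfi.integral_prod_left (hi.const_mul _) measurableSet_Ioo
          intro r hr
          simp only [Function.uncurry_apply_pair]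
          rw [inner1 r hr]
          refine (hC hr.1 hy).trans ?_
          have := mm_scale hr.1 hr.2.le hy
          calc C' * mm y r ≤ C' * (√(s/r) * mm y s) := by gcongr
            _ = _ := by ring
      _ = _ := by rw [integral_const_mul, (int_sqrt hs).2]; ring
  have right_ge : ∫ u in Set.Ioo 0 s, q y u * u ≤ ∫ u, ∫ r, f r u ∂μ ∂ν := by
    have inner2 : ∀ u ∈ Set.Ioo (0:ℝ) s, ∫ r, f r u ∂μ = q y u * u := by
      intro u hu
      have e : ∀ r, f r u = Set.indicator (Set.Iio u) (fun _ => q y u) r := by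
        intro r; simp [hf, Set.indicator]
      simp only [e, μ]
      rw [integral_indicator measurableSet_Iio, Measure.restrict_restrict measurableSet_Iio]
      have : Set.Iio u ∩ Set.Ioo 0 s = Set.Ioo 0 u := by
        ext r; simp only [Set.mem_inter_iff, Set.mem_Iio, Set.mem_Ioo]
        constructor
        · rintro ⟨a, b, c⟩; exact ⟨b, a⟩
        · rintro ⟨a, b⟩; exact ⟨b, a, b.trans hu.2⟩
      rw [this]
      simp [hu.1.le, mul_comm]
    rw [← setIntegral_congr_fun measurableSet_Ioo inner2]
    apply setIntegral_mono_set hfi.integral_prod_right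
    · refine (ae_restrict_mem measurableSet_Ioi).mono (fun u hu => ?_)
      apply integral_nonneg
      intro r
      simp only [hf]
      exact Set.indicator_apply_nonneg (fun _ => H.q_nonneg hy hu)
    · exact (Set.Ioo_subset_Ioi_self).eventuallyLE
  rw [hswap] at left_le
  exact right_ge.trans left_le

lemma pk_nonneg {t x y : ℝ} (ht : 0 < t) : 0 ≤ pk t x y := by
  unfold pk
  have := I0_ge_one (x*y/t)
  have : 0 ≤ I0 (x*y/t) := by linarith
  positivity

lemma pk_le {v y : ℝ} (hv : 0 < v) (hy : 1 < y) : pk v 1 y ≤ 2/(y-1)^2 := by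
  have h1 : I0 (1*y/v) ≤ exp (1*y/v) := I0_le_exp (by have : 0 < y := by linarith
                                                      positivity)
  unfold pk
  have ha : 0 < y - 1 := by linarith
  calc v⁻¹ * exp (-(1^2+y^2)/(2*v)) * I0 (1*y/v) ≤ v⁻¹ * exp (-(1^2+y^2)/(2*v)) * exp (1*y/v) := by gcongr
    _ = v⁻¹ * exp (-((y-1)^2/(2*v))) := by
        rw [mul_assoc, ← exp_add]; congr 2; field_simp; ring
    _ ≤ v⁻¹ * ((y-1)^2/(2*v))⁻¹ := by
        rw [exp_neg]
        gcongr
        have := add_one_le_exp ((y-1)^2/(2*v)); linarith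
    _ = _ := by field_simp

lemma hunt_int (H : BesselHK p₁ q) {t x y : ℝ} (hx : 1 < x) (hy : 1 < y) :
    IntegrableOn (fun u => q x u * pk (t-u) 1 y) (Set.Ioo 0 t) := by
  have hq : IntegrableOn (q x) (Set.Ioo 0 t) := (q_intOn0 H hx).mono_set Set.Ioo_subset_Ioi_self
  have hm : Measurable (fun u => pk (t-u) 1 y) := by
    unfold pk
    have := I0_continuous.measurable
    fun_prop
  refine Integrable.mul_bdd (c := 2/(y-1)^2) hq hm.aestronglyMeasurable ?_
  refine (ae_restrict_mem measurableSet_Ioo).mono (fun u hu => ?_)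
  have : 0 < t - u := by linarith [hu.2]
  rw [Real.norm_of_nonneg (pk_nonneg this)]
  exact pk_le this hy

lemma q_split (H : BesselHK p₁ q) {x s : ℝ} (hx : 1 < x) (hs : 0 < s) :
    ∫ u in Set.Ioo 0 s, q x u = 1 - ∫ u in Set.Ioi s, q x u := by
  rw [← q_mass_one H hx, ← Set.Ioc_union_Ioi_eq_Ioi hs.le,
    setIntegral_union Set.Ioc_disjoint_Ioi_same measurableSet_Ioi ((q_intOn0 H hx).mono_set Set.Ioc_subset_Ioi_self) (q_intOn H hs hx),
    integral_Ioc_eq_integral_Ioo]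
  ring

lemma upperU (H : BesselHK p₁ q) {C' : ℝ} (hC0 : 0 ≤ C')
    (hC : ∀ ⦃t x : ℝ⦄, 0 < t → 1 < x → (∫ u in Set.Ioi t, q x u) ≤ C' * mm x t)
    {s s' y w : ℝ} (hs : 0 < s) (hs' : 0 < s') (hss : s' ≤ s/2) (hy : 1 < y) (hw : 1 < w) :
    p₁ s y w ≤ s⁻¹ * exp (-w^2/(2*s)) * exp (y*w/s) *
      ((y^2-1)*w^2/(4*s^2) + C' * mm y s' + (w^2+1)/s^2 * (2*C'*s'*mm y s')) := by
  have hw0 : 0 < w := by linarith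
  have hy0 : 0 < y := by linarith
  have hh := H.hunt hs hy hw
  set P1 := pk s 1 w with hP1
  have hP1nn : 0 ≤ P1 := pk_nonneg hs
  have hqi : IntegrableOn (q y) (Set.Ioo 0 s') := (q_intOn0 H hy).mono_set Set.Ioo_subset_Ioi_self
  have hqui : IntegrableOn (fun u => q y u * u) (Set.Ioo 0 s') := by
    refine Integrable.mul_bdd (c := s') hqi measurable_id.aestronglyMeasurable ?_
    refine (ae_restrict_mem measurableSet_Ioo).mono (fun u hu => ?_)
    rw [Real.norm_of_nonneg hu.1.le]; exact hu.2.le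
  have hI : ∫ u in Set.Ioo 0 s', (P1 * q y u - P1 * ((w^2+1)/s^2) * (q y u * u)) ≤ ∫ u in Set.Ioo 0 s, q y u * pk (s-u) 1 w := by
    have hsub : Set.Ioo 0 s' ⊆ Set.Ioo 0 s := Set.Ioo_subset_Ioo_right (by linarith)
    refine le_trans ?_ (setIntegral_mono_set (hunt_int H hy hw) ?_ hsub.eventuallyLE)
    · apply setIntegral_mono_on ((hqi.const_mul _).sub (hqui.const_mul _)) ((hunt_int H hy hw).mono_set hsub) measurableSet_Ioo
      intro u hu
      have hu0 : 0 < u := hu.1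
      have hus : u ≤ s/2 := hu.2.le.trans hss
      have hsu : 0 < s - u := by linarith
      have hq0 := H.q_nonneg hy hu0
      have key : P1 * (1 - (w^2+1)/s^2 * u) ≤ pk (s-u) 1 w := by
        have e1 : 1 - (w^2+1)/s^2*u ≤ exp (-(w^2+1)*u/(2*s*(s-u))) := by
          have h1 : (w^2+1)*u/(2*s*(s-u)) ≤ (w^2+1)/s^2*u := by
            rw [div_mul_eq_mul_div]
            gcongr
            nlinarith
          have h2 := add_one_le_exp (-(w^2+1)*u/(2*s*(s-u)))
          have h3 : -(w^2+1)*u/(2*s*(s-u)) = -((w^2+1)*u/(2*s*(s-u))) := by ring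
          linarith
        have e2 : I0 (1*w/s) ≤ I0 (1*w/(s-u)) := by
          apply I0_mono (by positivity)
          gcongr; linarith
        calc P1 * (1 - (w^2+1)/s^2 * u) ≤ P1 * exp (-(w^2+1)*u/(2*s*(s-u))) := by gcongr
          _ = s⁻¹ * exp (-(1^2+w^2)/(2*(s-u))) * I0 (1*w/s) := by
              rw [hP1]; unfold pk
              rw [show -(1^2+w^2)/(2*(s-u)) = -(1^2+w^2)/(2*s) + -(w^2+1)*u/(2*s*(s-u)) by field_simp; ring, exp_add]; ring
          _ ≤ (s-u)⁻¹ * exp (-(1^2+w^2)/(2*(s-u))) * I0 (1*w/(s-u)) := by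
              have := I0_ge_one (1*w/s)
              have : 0 ≤ I0 (1*w/s) := by linarith
              gcongr
              linarith
      calc P1 * q y u - P1 * ((w^2+1)/s^2) * (q y u * u) = q y u * (P1 * (1 - (w^2+1)/s^2 * u)) := by ring
        _ ≤ _ := by gcongr
    · refine (ae_restrict_mem measurableSet_Ioo).mono (fun u hu => ?_)
      exact mul_nonneg (H.q_nonneg hy hu.1) (pk_nonneg (by linarith [hu.2]))
  rw [integral_sub (hqi.const_mul _) (hqui.const_mul _), integral_const_mul, integral_const_mul, q_split H hy hs'] at hI
  have hmom := moment H hC0 hC hy hs'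
  have hS := hC hs' hy
  set B := s⁻¹ * exp (-w^2/(2*s)) * exp (y*w/s) with hB
  have hexp1 : exp (-1/(2*s)) ≤ 1 := by
    rw [exp_le_one_iff]; apply div_nonpos_of_nonpos_of_nonneg <;> [norm_num; positivity]
  have hP1B : P1 ≤ B := by
    rw [hP1, hB]; unfold pk
    have h1 : I0 (1*w/s) ≤ exp (y*w/s) := by
      refine (I0_le_exp (by positivity)).trans (exp_le_exp.2 ?_)
      gcongr
    have h2 : exp (-(1^2+w^2)/(2*s)) ≤ exp (-w^2/(2*s)) := by
      apply exp_le_exp.2; gcongr; linarith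
    have : 0 ≤ I0 (1*w/s) := by linarith [I0_ge_one (1*w/s)]
    gcongr
  have hPP : pk s y w - P1 ≤ B * ((y^2-1)*w^2/(4*s^2)) := by
    have h1 := I0_upper (z := w/s) hy.le
    have h2 : I0 (y*(w/s)) ≤ exp (y*w/s) := by
      rw [← mul_div_assoc]; exact I0_le_exp (by positivity)
    have hy2 : 0 ≤ y^2 - 1 := by nlinarith
    have h0 : 0 ≤ I0 (y*(w/s)) := by linarith [I0_ge_one (y*(w/s))]
    have h3 : exp (-y^2/(2*s)) ≤ exp (-1/(2*s)) := by
      apply exp_le_exp.2; gcongr; linarith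
    have hd : 0 ≤ I0 (y*(w/s)) - I0 (w/s) := by
      rw [sub_nonneg]; apply I0_mono (by positivity)
      have : 0 < w/s := by positivity
      nlinarith
    have e1 : pk s y w = s⁻¹ * exp (-w^2/(2*s)) * (exp (-y^2/(2*s)) * I0 (y*(w/s))) := by
      unfold pk
      rw [show -(y^2+w^2)/(2*s) = -w^2/(2*s) + -y^2/(2*s) by ring, exp_add, mul_div_assoc]; ring
    have e2 : P1 = s⁻¹ * exp (-w^2/(2*s)) * (exp (-1/(2*s)) * I0 (w/s)) := by
      rw [hP1]; unfold pk
      rw [show -(1^2+w^2)/(2*s) = -w^2/(2*s) + -1/(2*s) by ring, exp_add, one_mul]; ring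
    have step : exp (-y^2/(2*s)) * I0 (y*(w/s)) - exp (-1/(2*s)) * I0 (w/s) ≤ exp (y*w/s) * ((y^2-1)*w^2/(4*s^2)) := by
      calc exp (-y^2/(2*s)) * I0 (y*(w/s)) - exp (-1/(2*s)) * I0 (w/s)
          ≤ exp (-1/(2*s)) * I0 (y*(w/s)) - exp (-1/(2*s)) * I0 (w/s) := by gcongr
        _ = exp (-1/(2*s)) * (I0 (y*(w/s)) - I0 (w/s)) := by ring
        _ ≤ 1 * (I0 (y*(w/s)) - I0 (w/s)) := by gcongr
        _ ≤ (y^2-1) * (w/s)^2/4 * I0 (y*(w/s)) := by linarith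
        _ ≤ (y^2-1) * (w/s)^2/4 * exp (y*w/s) := by gcongr
        _ = _ := by field_simp
    calc pk s y w - P1 = s⁻¹ * exp (-w^2/(2*s)) * (exp (-y^2/(2*s)) * I0 (y*(w/s)) - exp (-1/(2*s)) * I0 (w/s)) := by rw [e1, e2]; ring
      _ ≤ s⁻¹ * exp (-w^2/(2*s)) * (exp (y*w/s) * ((y^2-1)*w^2/(4*s^2))) := by gcongr
      _ = _ := by rw [hB]; ring
  have hm0 := mm_pos hs' hy
  have hSnn := (S_pos H hs' hy).le
  have f1 : P1 * (∫ u in Set.Ioi s', q y u) ≤ B * (C' * mm y s') := by gcongr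
  have f2 : P1 * ((w^2+1)/s^2) * (∫ u in Set.Ioo 0 s', q y u * u) ≤ B * ((w^2+1)/s^2 * (2*C'*s'*mm y s')) := by
    calc _ ≤ P1 * ((w^2+1)/s^2) * (2*C'*s'*mm y s') := by gcongr
      _ ≤ B * ((w^2+1)/s^2) * (2*C'*s'*mm y s') := by gcongr
      _ = _ := by ring
  rw [hh]
  nlinarith

lemma lowerC (H : BesselHK p₁ q) {t x y : ℝ} (ht : 0 < t) (hx : 1 < x) (hy : 1 < y)
    (hxt : 4*t ≤ (x-1)^2) (hP : pk t 1 x ≤ pk t y x) :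
    (1/2) * pk t 1 x * (∫ u in Set.Ioi (4*t^2/(x-1)^2), q y u) ≤ p₁ t y x := by
  have hx1 : 0 < x - 1 := by linarith
  have hx0 : 0 < x := by linarith
  set s := 4*t^2/(x-1)^2 with hsdef
  have hs : 0 < s := by positivity
  have hst : s ≤ t := by
    rw [hsdef, div_le_iff₀ (by positivity)]; nlinarith
  set P1 := pk t 1 x with hP1
  have hP1nn : 0 ≤ P1 := pk_nonneg ht
  have key : ∀ u, 0 < u → u < t → pk (t-u) 1 x ≤ P1 * exp (-(u*(x-1)^2/(4*t^2))) := by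
    intro u hu hut
    have htu : 0 < t - u := by linarith
    have h1 : I0 (1*x/(t-u)) ≤ exp (1*x/(t-u) - 1*x/t) * I0 (1*x/t) := by
      apply I0_ratio; gcongr; linarith
    have h2 : (t-u)⁻¹ ≤ t⁻¹ * exp (u/(t-u)) := by
      have := add_one_le_exp (u/(t-u))
      calc (t-u)⁻¹ = t⁻¹ * (u/(t-u)+1) := by field_simp; ring
        _ ≤ _ := by gcongr
    have h0 : 0 ≤ I0 (1*x/t) := by linarith [I0_ge_one (1*x/t)]
    have h0' : 0 ≤ I0 (1*x/(t-u)) := by linarith [I0_ge_one (1*x/(t-u))]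
    have h3 : u/(t-u) + -(1^2+x^2)/(2*(t-u)) + (1*x/(t-u) - 1*x/t) ≤ -(1^2+x^2)/(2*t) + -(u*(x-1)^2/(4*t^2)) := by
      have e : u/(t-u) + -(1^2+x^2)/(2*(t-u)) + (1*x/(t-u) - 1*x/t) - -(1^2+x^2)/(2*t) = (u/(t-u)) * (1 - (x-1)^2/(2*t)) := by
        field_simp; ring
      have e1 : 1 ≤ (x-1)^2/(4*t) := by rw [le_div_iff₀ (by positivity)]; linarith
      have e2 : 1 - (x-1)^2/(2*t) ≤ -((x-1)^2/(4*t)) := by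
        have : (x-1)^2/(2*t) = (x-1)^2/(4*t) + (x-1)^2/(4*t) := by field_simp; ring
        linarith
      have e3 : (u/(t-u)) * (1 - (x-1)^2/(2*t)) ≤ (u/(t-u)) * (-((x-1)^2/(4*t))) := by gcongr
      have e4 : u/t ≤ u/(t-u) := by gcongr; linarith
      have e5 : (u/t) * ((x-1)^2/(4*t)) ≤ (u/(t-u)) * ((x-1)^2/(4*t)) := by gcongr
      have e6 : (u/t) * ((x-1)^2/(4*t)) = u*(x-1)^2/(4*t^2) := by field_simp
      linarith
    calc pk (t-u) 1 x = (t-u)⁻¹ * exp (-(1^2+x^2)/(2*(t-u))) * I0 (1*x/(t-u)) := rfl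
      _ ≤ (t⁻¹ * exp (u/(t-u))) * exp (-(1^2+x^2)/(2*(t-u))) * (exp (1*x/(t-u) - 1*x/t) * I0 (1*x/t)) := by gcongr
      _ = t⁻¹ * exp (u/(t-u) + -(1^2+x^2)/(2*(t-u)) + (1*x/(t-u) - 1*x/t)) * I0 (1*x/t) := by
          rw [exp_add, exp_add]; ring
      _ ≤ t⁻¹ * exp (-(1^2+x^2)/(2*t) + -(u*(x-1)^2/(4*t^2))) * I0 (1*x/t) := by gcongr
      _ = _ := by rw [hP1]; unfold pk; rw [exp_add]; ring
  have hqi := q_intOn0 H hy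
  have hb : ∫ u in Set.Ioo 0 t, q y u * pk (t-u) 1 x ≤ ∫ u in Set.Ioi 0, (P1 * q y u - (1/2) * P1 * Set.indicator (Set.Ioi s) (q y) u) := by
    have hgi : IntegrableOn (fun u => P1 * q y u - (1/2) * P1 * Set.indicator (Set.Ioi s) (q y) u) (Set.Ioi 0) :=
      (hqi.const_mul _).sub ((hqi.indicator measurableSet_Ioi).const_mul _)
    have hgn : ∀ u, 0 < u → 0 ≤ P1 * q y u - (1/2) * P1 * Set.indicator (Set.Ioi s) (q y) u := by
      intro u hu
      have hq0 := H.q_nonneg hy hu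
      have := mul_nonneg hP1nn hq0
      by_cases h : u ∈ Set.Ioi s
      · rw [Set.indicator_of_mem h]; nlinarith
      · rw [Set.indicator_of_notMem h]; nlinarith
    refine le_trans ?_ (setIntegral_mono_set hgi ?_ (show Set.Ioo 0 t ⊆ Set.Ioi (0:ℝ) from Set.Ioo_subset_Ioi_self).eventuallyLE)
    · apply setIntegral_mono_on (hunt_int H hy hx) (hgi.mono_set Set.Ioo_subset_Ioi_self) measurableSet_Ioo
      intro u hu
      have hq0 := H.q_nonneg hy hu.1
      have hk := key u hu.1 hu.2
      by_cases h : u ∈ Set.Ioi s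
      · rw [Set.indicator_of_mem h]
        have hus : s < u := h
        have h1 : 1 ≤ u*(x-1)^2/(4*t^2) := by
          rw [hsdef, div_lt_iff₀ (by positivity)] at hus
          rw [le_div_iff₀ (by positivity)]; linarith
        have h2 : exp (-(u*(x-1)^2/(4*t^2))) ≤ 1/2 := by
          rw [exp_neg, one_div]
          gcongr
          have := add_one_le_exp (u*(x-1)^2/(4*t^2)); linarith
        have h3 : pk (t-u) 1 x ≤ P1 * (1/2) := hk.trans (by gcongr)
        calc _ ≤ q y u * (P1 * (1/2)) := by gcongr
          _ = _ := by ring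
      · rw [Set.indicator_of_notMem h]
        have h2 : exp (-(u*(x-1)^2/(4*t^2))) ≤ 1 := by
          rw [exp_le_one_iff]
          have hu0 : 0 < u := hu.1
          have : 0 ≤ u*(x-1)^2/(4*t^2) := by positivity
          linarith
        have h3 : pk (t-u) 1 x ≤ P1 * 1 := hk.trans (by gcongr)
        calc _ ≤ q y u * (P1 * 1) := by gcongr
          _ = _ := by ring
    · exact (ae_restrict_mem measurableSet_Ioi).mono (fun u hu => hgn u hu)
  rw [integral_sub (hqi.const_mul _) ((hqi.indicator measurableSet_Ioi).const_mul _), integral_const_mul, integral_const_mul,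
    q_mass_one H hy, integral_indicator measurableSet_Ioi, Measure.restrict_restrict measurableSet_Ioi,
      Set.inter_eq_left.2 (Set.Ioi_subset_Ioi hs.le)] at hb
  rw [H.hunt ht hy hx]
  linarith
end Part3

section Part4
section P4sec
variable {p₁ : ℝ → ℝ → ℝ → ℝ} {q : ℝ → ℝ → ℝ}

lemma frac_log {y ρ : ℝ} (hy : 1 < y) (hyr : y ≤ ρ) :
    (y^2-1)/ρ^2 ≤ 3 * (log y / log (1+ρ)) := by
  have hr : 0 < ρ := by linarith
  have hL : 0 < log (1+ρ) := log_pos (by linarith)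
  have hly : 0 < log y := log_pos hy
  rw [← mul_div_assoc, le_div_iff₀ hL]
  have h1 : log (1+ρ) ≤ log y + ρ/y := by
    have : log ((1+ρ)/y) ≤ (1+ρ)/y - 1 := log_le_sub_one_of_pos (by positivity)
    rw [log_div (by positivity) (by positivity)] at this
    have h2 : (1+ρ)/y - 1 ≤ ρ/y := by
      rw [add_div]
      have : 1/y ≤ 1 := by rw [div_le_one (by linarith)]; linarith
      linarith
    linarith
  have h3 : 1 - (y^2)⁻¹ ≤ 2 * log y := by
    have := one_sub_inv_le_log_of_pos (show 0 < y^2 by positivity)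
    rwa [log_pow] at this
  have h4 : 0 ≤ (y^2-1)/ρ^2 := by apply div_nonneg <;> nlinarith
  have h5 : (y^2-1)/ρ^2 ≤ 1 := by rw [div_le_one (by positivity)]; nlinarith
  have h6 : (y^2-1)/ρ^2 * (ρ/y) ≤ 1 - (y^2)⁻¹ := by
    have e : 1 - (y^2)⁻¹ = (y^2-1)/y^2 := by field_simp
    have e2 : (y^2-1)/ρ^2 * (ρ/y) = (y^2-1)/(ρ*y) := by field_simp
    rw [e, e2]
    apply div_le_div_of_nonneg_left <;> nlinarith
  calc _ ≤ (y^2-1)/ρ^2 * (log y + ρ/y) := by gcongr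
    _ = (y^2-1)/ρ^2 * log y + (y^2-1)/ρ^2 * (ρ/y) := by ring
    _ ≤ 1 * log y + 2 * log y := add_le_add (by gcongr) (by linarith)
    _ = _ := by ring

lemma mm_eq {y ρ : ℝ} (hy : 1 < y) (hr : 0 < ρ) (hyr : y ≤ 1 + ρ) :
    mm y (ρ^2) = log y / log (1+ρ) := by
  unfold mm
  rw [sqrt_sq hr.le]
  apply min_eq_right
  rw [div_le_one (log_pos (by linarith))]
  exact log_le_log (by linarith) hyr

lemma sup_bound (H : BesselHK p₁ q) {C' : ℝ} (hC0 : 0 ≤ C')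
    (hC : ∀ ⦃t x⦄, 0 < t → 1 < x → ∫ u in Set.Ioi t, q x u ≤ C' * mm x t)
    {t y w : ℝ} (ht : 1 < t) (hy : 1 < y) (hyt : y ≤ √t) (hw : 1 < w) :
    p₁ (t/2) y w ≤ (4 * exp 2 * (3 + 6*C')) * t⁻¹ * mm y t := by
  have ht0 : 0 < t := by linarith
  have hm := mm_pos ht0 hy
  have hs2 : √t^2 = t := sq_sqrt ht0.le
  have hst : 0 < √t := sqrt_pos.2 ht0
  have h := upperU H hC0 hC (s := t/2) (s' := t/4) (y := y) (w := w) (by linarith) (by linarith) (by linarith) hy hw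
  have hmm : mm y (t/4) ≤ 2 * mm y t := by
    have := mm_scale (x := y) (r := t/4) (s := t) (by linarith) (by linarith) hy
    have e : √(t/(t/4)) = 2 := by
      rw [show t/(t/4) = 2^2 by field_simp; norm_num]; exact sqrt_sq (by norm_num)
    rwa [e] at this
  set m := mm y t
  have hfr : (y^2-1)/t ≤ 3 * m := by
    have := frac_log hy hyt
    rw [← mm_eq hy hst (by linarith), hs2] at this
    exact this
  set W := w/√t with hW
  have hW2 : w^2/t = W^2 := by rw [hW, div_pow, hs2]
  have hW0 : 0 < W := by positivity
  have b1 : (y^2-1)*w^2/(4*(t/2)^2) ≤ 3 * W^2 * m := by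
    have : (y^2-1)*w^2/(4*(t/2)^2) = (y^2-1)/t * (w^2/t) := by field_simp; ring
    rw [this, hW2]; nlinarith [sq_nonneg W]
  have b2 : C' * mm y (t/4) ≤ 2*C'*m := by nlinarith
  have b3 : (w^2+1)/(t/2)^2*(2*C'*(t/4)*mm y (t/4)) ≤ 4*C'*(W^2+1)*m := by
    have : (w^2+1)/(t/2)^2*(2*C'*(t/4)*mm y (t/4)) = 2*C'*(w^2/t+1/t)*mm y (t/4) := by field_simp; ring
    rw [this, hW2]
    have hm4 := (mm_pos (show 0 < t/4 by linarith) hy).le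
    have i : 1/t ≤ 1 := by rw [div_le_one ht0]; linarith
    calc _ ≤ 2*C'*(W^2+1)*(2*m) := by gcongr
      _ = _ := by ring
  have hexp : exp (-w^2/(2*(t/2)))*exp (y*w/(t/2)) ≤ exp 2 * exp (-(W^2/2)) := by
    rw [← exp_add, ← exp_add]
    apply exp_le_exp.2
    have e1 : -w^2/(2*(t/2)) = -W^2 := by rw [← hW2]; field_simp
    have e2 : y*w/(t/2) ≤ 2*W := by
      have : y*w/(t/2) = 2*(y/√t)*W := by rw [hW]; field_simp; rw [hs2]
      rw [this]
      have : y/√t ≤ 1 := by rw [div_le_one hst]; exact hyt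
      nlinarith
    rw [e1]; nlinarith [sq_nonneg (W-2)]
  have hWe : (W^2+1) * exp (-(W^2/2)) ≤ 2 := by
    have := add_one_le_exp (W^2/2)
    rw [exp_neg, ← div_eq_mul_inv, div_le_iff₀ (exp_pos _)]
    nlinarith
  have hbr : (y^2-1)*w^2/(4*(t/2)^2) + C' * mm y (t/4) + (w^2+1)/(t/2)^2*(2*C'*(t/4)*mm y (t/4))
      ≤ (3+6*C')*(W^2+1)*m := by
    have : 3 * W^2 * m + 2*C'*m + 4*C'*(W^2+1)*m ≤ (3+6*C')*(W^2+1)*m := by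
      have h1 : 0 ≤ C' * m := by positivity
      have h2 : 0 ≤ C'*m*W^2 := by positivity
      nlinarith
    linarith
  have hbr0 : 0 ≤ (3+6*C')*(W^2+1)*m := by positivity
  calc p₁ (t/2) y w ≤ _ := h
    _ ≤ (t/2)⁻¹*exp (-w^2/(2*(t/2)))*exp (y*w/(t/2)) * ((3+6*C')*(W^2+1)*m) := by gcongr
    _ = (t/2)⁻¹*(exp (-w^2/(2*(t/2)))*exp (y*w/(t/2))) * ((3+6*C')*(W^2+1)*m) := by ring
    _ ≤ (t/2)⁻¹*(exp 2 * exp (-(W^2/2))) * ((3+6*C')*(W^2+1)*m) := by gcongr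
    _ = 2 * t⁻¹ * exp 2 * (3+6*C') * m * ((W^2+1) * exp (-(W^2/2))) := by rw [inv_div]; ring
    _ ≤ 2 * t⁻¹ * exp 2 * (3+6*C') * m * 2 := by gcongr
    _ = _ := by ring

lemma up_ck (H : BesselHK p₁ q) {C' : ℝ} (hC0 : 0 ≤ C')
    (hC : ∀ ⦃t x⦄, 0 < t → 1 < x → ∫ u in Set.Ioi t, q x u ≤ C' * mm x t)
    {t x y : ℝ} (ht : 1 < t) (hx : 1 < x) (hy : 1 < y) (hyt : y ≤ √t) :
    p₁ t x y ≤ (4 * exp 2 * (3 + 6*C')) * C' * t⁻¹ * mm y t * mm x (t/2) := by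
  set B := (4 * exp 2 * (3 + 6*C')) * t⁻¹ * mm y t with hB
  have ht2 : 0 < t/2 := by linarith
  have hm := mm_pos (show 0 < t by linarith) hy
  have hB0 : 0 ≤ B := by have : 0 < t := by linarith
                         positivity
  have h := H.ck ht2 ht2 hx hy
  rw [show t/2+t/2 = t by ring] at h
  rw [h]
  calc _ ≤ ∫ w in Set.Ioi (1:ℝ), B * (p₁ (t/2) x w * w) := by
        apply integral_mono_of_nonneg
        · filter_upwards [ae_restrict_mem measurableSet_Ioi] with w hw
          have hw : 1 < w := hw
          have h1 := H.p₁_nonneg ht2 hx hw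
          have h2 := H.p₁_nonneg ht2 hw hy
          have : 0 < w := by linarith
          positivity
        · exact (p1_intOn H ht2 hx).const_mul B
        · filter_upwards [ae_restrict_mem measurableSet_Ioi] with w hw
          have hw : 1 < w := hw
          have h1 := H.p₁_nonneg ht2 hx hw
          have h3 := sup_bound H hC0 hC ht hy hyt hw
          rw [← H.symm ht2 hw hy] at h3
          have : 0 < w := by linarith
          calc p₁ (t/2) x w * p₁ (t/2) w y * w ≤ p₁ (t/2) x w * B * w := by gcongr
            _ = _ := by ring
    _ = B * ∫ u in Set.Ioi (t/2), q x u := by rw [integral_const_mul, H.mass ht2 hx]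
    _ ≤ B * (C' * mm x (t/2)) := by gcongr; exact hC ht2 hx
    _ = _ := by rw [hB]; ring

end P4sec
end Part4

section Part5
section P5sec
variable {p₁ : ℝ → ℝ → ℝ → ℝ} {q : ℝ → ℝ → ℝ}

noncomputable def DD (t x : ℝ) : ℝ := log (3*t/(x + √t))

noncomputable def EE (t x y : ℝ) : ℝ :=
  log x * log y * (DD t x * DD t y)⁻¹ * t⁻¹ * exp (-(x^2+y^2)/(2*t))

lemma DD_ge {t x : ℝ} (ht : 1 < t) (hx : 0 < x) (hxt : x ≤ t) : log (3/2) ≤ DD t x := by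
  have h1 : √t ≤ t := by rw [sqrt_le_left (by linarith)]; nlinarith
  have h2 : 0 < √t := sqrt_pos.2 (by linarith)
  apply log_le_log (by norm_num)
  rw [div_le_div_iff₀ (by norm_num) (by positivity)]
  linarith

lemma log32 : 0 < log (3/2 : ℝ) := log_pos (by norm_num)

lemma DD_le {t x : ℝ} (ht : 1 < t) (hx : 0 < x) : DD t x ≤ log (3*√t) := by
  have h2 : 0 < √t := sqrt_pos.2 (by linarith)
  have hs : √t^2 = t := sq_sqrt (by linarith)
  apply log_le_log (by positivity)
  rw [div_le_iff₀ (by positivity)]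
  nlinarith

lemma DD_le2 {t x : ℝ} (ht : 1 < t) (hx : 0 < x) : DD t x ≤ log (3*(t/x)) := by
  have h2 : 0 < √t := sqrt_pos.2 (by linarith)
  apply log_le_log (by positivity)
  rw [← mul_div_assoc]
  gcongr
  linarith

lemma up1 (H : BesselHK p₁ q) {C' : ℝ} (hC0 : 0 ≤ C')
    (hC : ∀ ⦃t x⦄, 0 < t → 1 < x → ∫ u in Set.Ioi t, q x u ≤ C' * mm x t)
    {t x y : ℝ} (ht : 1 < t) (hx : 1 < x) (hy : 1 < y) (hyt : y ≤ √t) (hxt : x ≤ 4*√t) (hxt' : x ≤ t) :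
    p₁ t x y ≤ 9 * (4 * exp 2 * (3 + 6*C')) * C' * exp 9 * EE t x y := by
  have ht0 : 0 < t := by linarith
  have hs : √t^2 = t := sq_sqrt (by linarith)
  have hs0 : 0 < √t := sqrt_pos.2 (by linarith)
  have h := up_ck H hC0 hC ht hx hy hyt
  have hL : log (3*√t) ≤ 3 * log (1+√(t/2)) := by
    have : (3:ℝ) * log (1+√(t/2)) = log ((1+√(t/2))^3) := by rw [log_pow]; norm_num
    rw [this]
    apply log_le_log (by positivity)
    have a0 : 0 < √(t/2) := sqrt_pos.2 (by linarith)
    have a2 : √(t/2)^2 = t/2 := sq_sqrt (by linarith)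
    have : √t ≤ 3/2*√(t/2) := by
      apply le_of_sq_le_sq _ (by positivity) 
      rw [mul_pow, a2, hs]; linarith
    nlinarith [sq_nonneg (√(t/2)-1/4), pow_pos a0 3]
  have hl0 : 0 < log (1+√(t/2)) := log1_pos (by linarith)
  have key : ∀ z, 1 < z → z ≤ t → mm z (t/2) ≤ 3 * (log z * (DD t z)⁻¹) := by
    intro z hz hzt
    have hd := lt_of_lt_of_le log32 (DD_ge ht (by linarith : 0 < z) hzt)
    have hz0 := log_pos hz
    have hd2 := DD_le ht (by linarith : 0 < z)
    calc mm z (t/2) ≤ log z / log (1+√(t/2)) := min_le_right _ _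
      _ ≤ 3 * (log z * (DD t z)⁻¹) := by
        rw [← div_eq_mul_inv, ← mul_div_assoc, div_le_div_iff₀ hl0 hd]
        nlinarith
  have hyt' : y ≤ t := by nlinarith
  have kx := key x hx hxt'
  have ky := key y hy hyt'
  have my : mm y t ≤ mm y (t/2) := mm_anti (by linarith) (by linarith) hy
  have mx0 := (mm_pos (show 0 < t/2 by linarith) hx).le
  have my0 := (mm_pos (show 0 < t/2 by linarith) hy).le
  have he : 1 ≤ exp 9 * exp (-(x^2+y^2)/(2*t)) := by
    rw [← exp_add]
    apply one_le_exp
    have : (x^2+y^2)/(2*t) ≤ 9 := by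
      rw [div_le_iff₀ (by linarith)]
      nlinarith
    rw [neg_div]; linarith
  have hdx := lt_of_lt_of_le log32 (DD_ge ht (by linarith : 0 < x) hxt')
  have hdy := lt_of_lt_of_le log32 (DD_ge ht (by linarith : 0 < y) hyt')
  have lx := log_pos hx
  have ly := log_pos hy
  calc _ ≤ _ := h
    _ ≤ (4 * exp 2 * (3 + 6*C')) * C' * t⁻¹ * (3 * (log y * (DD t y)⁻¹)) * (3 * (log x * (DD t x)⁻¹)) := by
      gcongr
      linarith
    _ = (4 * exp 2 * (3 + 6*C')) * C' * t⁻¹ * (3 * (log y * (DD t y)⁻¹)) * (3 * (log x * (DD t x)⁻¹)) * 1 := by ring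
    _ ≤ (4 * exp 2 * (3 + 6*C')) * C' * t⁻¹ * (3 * (log y * (DD t y)⁻¹)) * (3 * (log x * (DD t x)⁻¹)) * 
        (exp 9 * exp (-(x^2+y^2)/(2*t))) := by gcongr
    _ = _ := by unfold EE; rw [mul_inv]; ring

set_option maxHeartbeats 1000000 in
lemma up2 (H : BesselHK p₁ q) {C' : ℝ} (hC0 : 0 ≤ C')
    (hC : ∀ ⦃t x⦄, 0 < t → 1 < x → ∫ u in Set.Ioi t, q x u ≤ C' * mm x t)
    {t x y : ℝ} (ht : 1 < t) (hx : 1 < x) (hy : 1 < y) (hyt : y ≤ √t) (hxt : 4*√t ≤ x) (hxy : x * y ≤ t) :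
    p₁ t x y ≤ exp 2 * (1 + 5*C') * 2 * EE t x y := by
  have ht0 : 0 < t := by linarith
  have hx0 : 0 < x := by linarith
  have hs : √t^2 = t := sq_sqrt (by linarith)
  have hs0 : 0 < √t := sqrt_pos.2 (by linarith)
  set ρ := t/x with hρ
  have hρy : y ≤ ρ := by rw [hρ, le_div_iff₀ hx0]; linarith
  have hρ0 : 0 < ρ := by positivity
  have hρx : ρ * x = t := by rw [hρ]; field_simp
  have hxt' : x ≤ t := by nlinarith
  have hyt' : y ≤ t := by nlinarith
  have hx2 : 16*t ≤ x^2 := by nlinarith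
  have hρ2 : ρ^2 ≤ t/2 := by
    have : ρ^2 = t*(t/x^2) := by rw [hρ]; field_simp
    have h2 : t/x^2 ≤ 1/2 := by rw [div_le_iff₀ (by positivity)]; linarith
    rw [this]; nlinarith
  have h := upperU H hC0 hC (s := t) (s' := ρ^2) (y := y) (w := x) ht0 (by positivity) hρ2 hy hx
  rw [← H.symm ht0 hx hy] at h
  have hfr := frac_log hy hρy
  have hme := mm_eq hy hρ0 (by linarith)
  rw [← hme] at hfr
  have hm0 := mm_pos (show 0 < ρ^2 by positivity) hy
  set m := mm y (ρ^2)
  have b1 : (y^2-1)*x^2/(4*t^2) ≤ m := by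
    have : (y^2-1)*x^2/(4*t^2) = (y^2-1)/ρ^2/4 := by rw [hρ]; field_simp
    rw [this]; linarith
  have b3 : (x^2+1)/t^2*(2*C'*ρ^2*m) ≤ 4*C'*m := by
    have : (x^2+1)/t^2*(2*C'*ρ^2*m) = 2*(1+1/x^2)*(C'*m) := by rw [hρ]; field_simp
    rw [this]
    have h2 : 1/x^2 ≤ 1 := by rw [div_le_iff₀ (by positivity)]; nlinarith
    have : 0 ≤ C'*m := by positivity
    nlinarith
  have hdx := lt_of_lt_of_le log32 (DD_ge ht hx0 hxt')
  have hdy := lt_of_lt_of_le log32 (DD_ge ht (by linarith : 0 < y) hyt')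
  have lx := log_pos hx
  have ly := log_pos hy
  have hm : m ≤ 2 * (log y * (DD t x)⁻¹) := by
    rw [hme, ← div_eq_mul_inv, ← mul_div_assoc, div_le_div_iff₀ (log_pos (by linarith)) hdx]
    have h1 := DD_le2 ht hx0
    have h2 : log (3*ρ) ≤ 2 * log (1+ρ) := by
      have : (2:ℝ) * log (1+ρ) = log ((1+ρ)^2) := by rw [log_pow]; norm_num
      rw [this]
      apply log_le_log (by positivity); nlinarith [sq_nonneg (ρ-1/2)]
    nlinarith
  have hr : 1 ≤ log x * (DD t y)⁻¹ := by
    rw [← div_eq_mul_inv, le_div_iff₀ hdy, one_mul]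
    refine (DD_le ht (by linarith)).trans (log_le_log (by positivity) (by linarith))
  have he : exp (-x^2/(2*t)) * exp (y*x/t) ≤ exp 2 * exp (-(x^2+y^2)/(2*t)) := by
    rw [← exp_add, ← exp_add]
    apply exp_le_exp.2
    have h1 : y*x/t ≤ 1 := by rw [div_le_one ht0]; linarith
    have h2 : y^2/(2*t) ≤ 1 := by rw [div_le_one (by positivity)]; nlinarith
    have h3 : -(x^2+y^2)/(2*t) = -x^2/(2*t) - y^2/(2*t) := by ring
    rw [h3]; linarith
  calc _ ≤ _ := h
    _ = t⁻¹ * (exp (-x^2/(2*t)) * exp (y*x/t)) * ((y^2-1)*x^2/(4*t^2) + C'*m + (x^2+1)/t^2*(2*C'*ρ^2*m)) := by ring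
    _ ≤ t⁻¹ * (exp 2 * exp (-(x^2+y^2)/(2*t))) * ((1+5*C')*m) := by
      have y1 : 0 ≤ y^2 - 1 := by nlinarith
      have n : 0 ≤ (y^2-1)*x^2/(4*t^2) + C'*m + (x^2+1)/t^2*(2*C'*ρ^2*m) := by positivity
      have n2 : (y^2-1)*x^2/(4*t^2) + C'*m + (x^2+1)/t^2*(2*C'*ρ^2*m) ≤ (1+5*C')*m := by linarith
      exact mul_le_mul (mul_le_mul_of_nonneg_left he (by positivity)) n2 n (by positivity)
    _ ≤ t⁻¹ * (exp 2 * exp (-(x^2+y^2)/(2*t))) * ((1+5*C')*(2 * (log y * (DD t x)⁻¹))) := by gcongr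
    _ = t⁻¹ * (exp 2 * exp (-(x^2+y^2)/(2*t))) * ((1+5*C')*(2 * (log y * (DD t x)⁻¹))) * 1 := by ring
    _ ≤ t⁻¹ * (exp 2 * exp (-(x^2+y^2)/(2*t))) * ((1+5*C')*(2 * (log y * (DD t x)⁻¹))) * (log x * (DD t y)⁻¹) := by gcongr
    _ = _ := by unfold EE; rw [mul_inv]; ring

lemma hP_gen {t x y : ℝ} (ht : 0 < t) (hx : 0 < x) (hy : 1 < y) (hxt : x ≤ t)
    (h : 3 * exp ((y^2-1)/(2*t)) ≤ x^2/(2*t)) : pk t 1 x ≤ pk t y x := by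
  set δ := (y^2-1)/(2*t) with hδ
  have hδ0 : 0 ≤ δ := by apply div_nonneg <;> nlinarith
  have h1 : I0 (x/t) ≤ 3 := by
    refine (I0_le_exp (by positivity)).trans ?_
    have : x/t ≤ 1 := by rw [div_le_one ht]; exact hxt
    have h2 := exp_le_exp.2 this
    have := exp_one_lt_d9
    linarith
  have h0 : 0 ≤ I0 (x/t) := zero_le_one.trans (I0_ge_one _)
  have h2 := I0_lower (y := y) (z := x/t) hy.le
  have h3 : exp δ ≤ 1 + δ * exp δ := by
    have := add_one_le_exp (-δ)
    have h4 : exp δ * exp (-δ) = 1 := by rw [← exp_add]; simp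
    nlinarith [exp_pos δ]
  have h5 : (y^2-1)*(x/t)^2/4 = δ * (x^2/(2*t)) := by rw [hδ]; field_simp; norm_num
  have h6 : exp δ * I0 (x/t) ≤ I0 (y*(x/t)) := by
    calc exp δ * I0 (x/t) ≤ (1 + δ * exp δ) * I0 (x/t) := by gcongr
      _ = I0 (x/t) + δ * exp δ * I0 (x/t) := by ring
      _ ≤ I0 (x/t) + δ * exp δ * 3 := by gcongr
      _ = I0 (x/t) + δ * (3 * exp δ) := by ring
      _ ≤ I0 (x/t) + δ * (x^2/(2*t)) := by gcongr
      _ ≤ _ := by linarith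
  unfold pk
  have e1 : exp (-(1^2+x^2)/(2*t)) = exp (-(y^2+x^2)/(2*t)) * exp δ := by
    rw [← exp_add]; congr 1; rw [hδ]; field_simp; ring
  rw [e1, show 1*x/t = x/t by ring, show y*x/t = y*(x/t) by ring]
  calc t⁻¹ * (exp (-(y^2+x^2)/(2*t)) * exp δ) * I0 (x/t) = t⁻¹ * exp (-(y^2+x^2)/(2*t)) * (exp δ * I0 (x/t)) := by ring
    _ ≤ _ := by gcongr

lemma pk_lower {t x : ℝ} (ht : 0 < t) : t⁻¹ * exp (-(1+x^2)/(2*t)) ≤ pk t 1 x := by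
  unfold pk
  have := I0_ge_one (1*x/t)
  rw [one_pow]
  exact le_mul_of_one_le_right (by positivity) this

end P5sec
end Part5

section Part6
section P6sec
variable {p₁ : ℝ → ℝ → ℝ → ℝ} {q : ℝ → ℝ → ℝ}

set_option maxHeartbeats 1000000 in
lemma low2 (H : BesselHK p₁ q) {c' : ℝ} (hc0 : 0 < c')
    (hc : ∀ ⦃t x⦄, 0 < t → 1 < x → c' * mm x t ≤ ∫ u in Set.Ioi t, q x u)
    {t x y : ℝ} (ht : 1 < t) (hx : 1 < x) (hy : 1 < y) (hyt : y ≤ √t) (hxt : 4*√t ≤ x) (hxy : x * y ≤ t) :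
    c'/8 * EE t x y ≤ p₁ t x y := by
  have ht0 : 0 < t := by linarith
  have hx0 : 0 < x := by linarith
  have hs : √t^2 = t := sq_sqrt (by linarith)
  have hs0 : 1 < √t := by linarith
  have hx1 : 3/4*x ≤ x - 1 := by linarith
  have hxp : 0 < x - 1 := by linarith
  have hxt' : x ≤ t := by nlinarith
  have hyt' : y ≤ t := by nlinarith
  have hx2 : 16*t ≤ x^2 := by nlinarith
  have hx4 : 4*t ≤ (x-1)^2 := by nlinarith
  have hP : pk t 1 x ≤ pk t y x := by
    apply hP_gen ht0 hx0 hy hxt'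
    have h1 : (y^2-1)/(2*t) ≤ 1/2 := by rw [div_le_iff₀ (by positivity)]; nlinarith
    have h2 : exp ((y^2-1)/(2*t)) ≤ 2 := by
      refine (exp_le_exp.2 h1).trans ?_
      have h3 : exp (1/2:ℝ) * exp (1/2:ℝ) = exp 1 := by rw [← exp_add]; norm_num
      have := exp_one_lt_d9
      nlinarith [exp_pos (1/2:ℝ)]
    have h3 : 8 ≤ x^2/(2*t) := by rw [le_div_iff₀ (by positivity)]; linarith
    linarith
  have h := lowerC H ht0 hx hy hx4 hP
  rw [← H.symm ht0 hx hy] at h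
  set σ := 2*t/(x-1) with hσ
  have hσ0 : 0 < σ := by positivity
  have hσ2 : 4*t^2/(x-1)^2 = σ^2 := by rw [hσ]; field_simp; norm_num
  rw [hσ2] at h
  have hyσ : y ≤ σ := by rw [hσ, le_div_iff₀ hxp]; nlinarith
  have hS := hc (show 0 < σ^2 by positivity) hy
  rw [mm_eq hy hσ0 (by linarith)] at hS
  have hdx := lt_of_lt_of_le log32 (DD_ge ht hx0 hxt')
  have hdy := lt_of_lt_of_le log32 (DD_ge ht (by linarith : 0 < y) hyt')
  have lx := log_pos hx
  have ly := log_pos hy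
  have k1 : 1/2 * (log y * (DD t x)⁻¹) ≤ log y / log (1+σ) := by
    rw [← div_eq_mul_inv, ← mul_div_assoc, div_le_div_iff₀ hdx (log_pos (by linarith))]
    have h2 : log (1+σ) ≤ 2 * DD t x := by
      have : (2:ℝ) * DD t x = log ((3*t/(x+√t))^2) := by rw [log_pow]; norm_num [DD]
      rw [this]
      apply log_le_log (by positivity)
      set ρ := t/x with hρ
      have hρ1 : 1 ≤ ρ := by rw [hρ, le_div_iff₀ hx0]; linarith
      have a1 : σ ≤ 8/3*ρ := by
        rw [hσ, hρ, ← mul_div_assoc, div_le_div_iff₀ hxp hx0]; nlinarith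
      have a2 : 12/5*ρ ≤ 3*t/(x+√t) := by
        rw [hρ, ← mul_div_assoc, div_le_div_iff₀ hx0 (by positivity)]; nlinarith
      nlinarith
    nlinarith
  have k2 : 1/2 * (log x * (DD t y)⁻¹) ≤ 1 := by
    rw [← div_eq_mul_inv, ← mul_div_assoc, div_le_one hdy]
    have h2 : log x ≤ 2 * DD t y := by
      have : (2:ℝ) * DD t y = log ((3*t/(y+√t))^2) := by rw [log_pow]; norm_num [DD]
      rw [this]
      apply log_le_log (by positivity)
      have a2 : 3/2*√t ≤ 3*t/(y+√t) := by
        rw [le_div_iff₀ (by positivity)]; nlinarith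
      nlinarith
    linarith
  have k3 : t⁻¹ * exp (-(x^2+y^2)/(2*t)) ≤ pk t 1 x := by
    refine le_trans ?_ (pk_lower ht0)
    have : -(x^2+y^2) ≤ -(1+x^2) := by nlinarith
    gcongr
  calc c'/8 * EE t x y = 1/2 * (t⁻¹ * exp (-(x^2+y^2)/(2*t))) * (c' * (1/2 * (log y * (DD t x)⁻¹))) * (1/2 * (log x * (DD t y)⁻¹)) := by
        unfold EE; rw [mul_inv]; ring
    _ ≤ 1/2 * (t⁻¹ * exp (-(x^2+y^2)/(2*t))) * (c' * (1/2 * (log y * (DD t x)⁻¹))) * 1 := by gcongr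
    _ = 1/2 * (t⁻¹ * exp (-(x^2+y^2)/(2*t))) * (c' * (1/2 * (log y * (DD t x)⁻¹))) := by ring
    _ ≤ 1/2 * pk t 1 x * (c' * (log y / log (1+σ))) := by
      have := pk_nonneg (x := 1) (y := x) ht0
      gcongr
    _ ≤ 1/2 * pk t 1 x * (∫ u in Set.Ioi (σ^2), q y u) := by
      have := pk_nonneg (x := 1) (y := x) ht0
      gcongr
    _ ≤ _ := h

lemma low1_aux (H : BesselHK p₁ q) {c' : ℝ} (hc0 : 0 < c')
    (hc : ∀ ⦃t x⦄, 0 < t → 1 < x → c' * mm x t ≤ ∫ u in Set.Ioi t, q x u)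
    {t y w K : ℝ} (hK : 10 ≤ K) (hK2 : 3 * exp 16 ≤ K^2) (hy : 1 < y) (hyt : y ≤ 4*√t) (ht : 4*K ≤ √t)
    (hw1 : K*√t ≤ w) (hw2 : w ≤ 2*K*√t) :
    (1/2) * exp (-(4*K^2+1)) * c' * t⁻¹ * mm y t ≤ p₁ (t/2) y w := by
  have hs0 : 40 ≤ √t := by linarith
  have ht0 : 0 < t := sqrt_pos.1 (by linarith)
  have hs : √t^2 = t := sq_sqrt ht0.le
  have ht1 : 1 < t := by nlinarith
  have hw10 : 10*√t ≤ w := by nlinarith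
  have hw : 1 < w := by linarith
  have hww : 9*√t ≤ w - 1 := by linarith
  have hw4 : t ≤ (w-1)^2 := by nlinarith
  have hw5 : 4*(t/2) ≤ (w-1)^2 := by nlinarith
  have hwt : w ≤ t/2 := by nlinarith
  have hwK : K^2*t ≤ w^2 := by
    calc K^2*t = (K*√t)^2 := by rw [mul_pow, hs]
      _ ≤ w^2 := by gcongr
  have hwK2 : w^2 ≤ 4*K^2*t := by
    calc w^2 ≤ (2*K*√t)^2 := by gcongr
      _ = 4*K^2*t := by rw [mul_pow, hs]; ring
  have hP : pk (t/2) 1 w ≤ pk (t/2) y w := by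
    apply hP_gen (by linarith) (by linarith) hy hwt
    have h1 : (y^2-1)/(2*(t/2)) ≤ 16 := by rw [div_le_iff₀ (by positivity)]; nlinarith
    have h2 := exp_le_exp.2 h1
    have h3 : K^2 ≤ w^2/(2*(t/2)) := by rw [le_div_iff₀ (by positivity)]; linarith
    linarith
  have h := lowerC H (by linarith : 0 < t/2) hw hy hw5 hP
  have hwp : 0 < w - 1 := by linarith
  have hsl : 4*(t/2)^2/(w-1)^2 ≤ t := by
    rw [div_le_iff₀ (by positivity)]; nlinarith
  have hm := mm_anti (by positivity) hsl hy
  have hS := hc (show 0 < 4*(t/2)^2/(w-1)^2 by positivity) hy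
  have hm0 := mm_pos ht0 hy
  have k3 : t⁻¹ * exp (-(4*K^2+1)) ≤ pk (t/2) 1 w := by
    refine le_trans ?_ (pk_lower (by linarith))
    have a1 : t⁻¹ ≤ (t/2)⁻¹ := by gcongr; linarith
    have a2 : -(4*K^2+1) ≤ -(1+w^2)/(2*(t/2)) := by
      rw [le_div_iff₀ (by positivity)]; nlinarith
    gcongr
  calc _ = 1/2 * (t⁻¹ * exp (-(4*K^2+1))) * (c' * mm y t) := by ring
    _ ≤ 1/2 * pk (t/2) 1 w * (c' * mm y (4*(t/2)^2/(w-1)^2)) := by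
      have := pk_nonneg (x := 1) (y := w) (show 0 < t/2 by linarith)
      gcongr
    _ ≤ 1/2 * pk (t/2) 1 w * ∫ u in Set.Ioi (4*(t/2)^2/(w-1)^2), q y u := by
      have := pk_nonneg (x := 1) (y := w) (show 0 < t/2 by linarith)
      gcongr
    _ ≤ _ := h

lemma mm_low {t x : ℝ} (ht : 1 < t) (hx : 1 < x) (hxt : x ≤ 4*√t) (hxt' : x ≤ t) :
    1/8 * (log x * (DD t x)⁻¹) ≤ mm x t := by
  have ht0 : 0 < t := by linarith
  have hs : √t^2 = t := sq_sqrt (by linarith)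
  have hs0 : 0 < √t := sqrt_pos.2 ht0
  have hs1 : 1 < √t := by nlinarith
  have hx0 : 0 < x := by linarith
  have hd := lt_of_lt_of_le log32 (DD_ge ht hx0 hxt')
  have lx := log_pos hx
  have hl := log1_pos ht0
  have h1 : log x ≤ 2 * log (1+√t) := by
    have : (2:ℝ) * log (1+√t) = log ((1+√t)^2) := by rw [log_pow]; norm_num
    rw [this]
    apply log_le_log hx0; nlinarith [sq_nonneg (√t-1)]
  have h2 : log (1+√t) ≤ 4 * DD t x := by
    have : (4:ℝ) * DD t x = log ((3*t/(x+√t))^4) := by rw [log_pow]; norm_num [DD]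
    rw [this]
    apply log_le_log (by positivity)
    have a1 : 3/2 ≤ 3*t/(x+√t) := by
      rw [div_le_div_iff₀ (by norm_num) (by positivity)]; nlinarith
    have a2 : 3/5*√t ≤ 3*t/(x+√t) := by
      rw [le_div_iff₀ (by positivity)]; nlinarith
    set R := 3*t/(x+√t)
    have b1 : 9/4 ≤ R^2 := by nlinarith
    have b3 : 9/25*t ≤ R^2 := by nlinarith
    rw [show R^4 = R^2*R^2 by ring]
    rcases le_total (√t) 4 with h4 | h4
    · nlinarith
    · nlinarith [sq_nonneg (√t-4)]
  unfold mm
  apply le_min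
  · rw [← div_eq_mul_inv, ← mul_div_assoc, div_le_one hd]; linarith
  · rw [← div_eq_mul_inv, ← mul_div_assoc, div_le_div_iff₀ hd hl]; nlinarith

set_option maxHeartbeats 1000000 in
lemma low1 (H : BesselHK p₁ q) {c' : ℝ} (hc0 : 0 < c')
    (hc : ∀ ⦃t x⦄, 0 < t → 1 < x → c' * mm x t ≤ ∫ u in Set.Ioi t, q x u)
    {t x y K : ℝ} (hK : 10 ≤ K) (hK2 : 3 * exp 16 ≤ K^2) (hx : 1 < x) (hy : 1 < y)
    (hxt : x ≤ 4*√t) (hyt : y ≤ 4*√t) (ht : 4*K ≤ √t) :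
    ((1/2) * exp (-(4*K^2+1)) * c')^2 * K^2 /64 * EE t x y ≤ p₁ t x y := by
  have hs0 : 40 ≤ √t := by linarith
  have ht0 : 0 < t := sqrt_pos.1 (by linarith)
  have hs : √t^2 = t := sq_sqrt ht0.le
  have ht1 : 1 < t := by nlinarith
  have hxt' : x ≤ t := by nlinarith
  have hyt' : y ≤ t := by nlinarith
  have ht2 : 0 < t/2 := by linarith
  set A := (1/2) * exp (-(4*K^2+1)) * c' with hA
  have hA0 : 0 < A := by positivity
  have hmx := mm_pos ht0 hx
  have hmy := mm_pos ht0 hy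
  have h := H.ck ht2 ht2 hx hy
  rw [show t/2+t/2 = t by ring] at h
  have hpos := p1_pos H ht0 hx hy
  have hInt : IntegrableOn (fun w => p₁ (t/2) x w * p₁ (t/2) w y * w) (Set.Ioi 1) := by
    by_contra hn
    rw [integral_undef hn] at h
    linarith
  have hsub : Set.Icc (K*√t) (2*K*√t) ⊆ Set.Ioi 1 := by
    intro w hw
    have := hw.1
    show 1 < w
    nlinarith
  have hw0 : 1 < K*√t := by nlinarith
  have hmain : A^2*K^2*t⁻¹*mm x t*mm y t ≤ p₁ t x y := by
    rw [h]
    calc A^2*K^2*t⁻¹*mm x t*mm y t = ∫ w in Set.Icc (K*√t) (2*K*√t), (A*t⁻¹*mm x t)*(A*t⁻¹*mm y t)*(K*√t) := by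
          rw [setIntegral_const, Measure.real, volume_Icc, ENNReal.toReal_ofReal (by nlinarith), smul_eq_mul]
          have : (2*K*√t-K*√t) * (A*t⁻¹*mm x t*(A*t⁻¹*mm y t)*(K*√t)) = A^2*K^2*t⁻¹*t⁻¹*√t^2*mm x t*mm y t := by ring
          rw [this, hs]; field_simp
      _ ≤ ∫ w in Set.Icc (K*√t) (2*K*√t), p₁ (t/2) x w * p₁ (t/2) w y * w := by
          apply setIntegral_mono_on
          · exact integrableOn_const (by simp)
          · exact hInt.mono_set hsub
          · exact measurableSet_Icc
          · intro w hw
            have hw1 : 1 < w := hsub hw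
            have h1 := low1_aux H hc0 hc hK hK2 hx hxt ht hw.1 hw.2
            have h2 := low1_aux H hc0 hc hK hK2 hy hyt ht hw.1 hw.2
            rw [← H.symm ht2 hw1 hy] at h2
            have := H.p₁_nonneg ht2 hx hw1
            have h5 := H.p₁_nonneg ht2 hw1 hy
            have := hw.1
            gcongr
      _ ≤ _ := by
          apply setIntegral_mono_set hInt
          · filter_upwards [ae_restrict_mem measurableSet_Ioi] with w hw
            have hw : 1 < w := hw
            have h1 := H.p₁_nonneg ht2 hx hw
            have h2 := H.p₁_nonneg ht2 hw hy
            have : 0 < w := by linarith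
            positivity
          · exact hsub.eventuallyLE
  have kx := mm_low ht1 hx hxt hxt'
  have ky := mm_low ht1 hy hyt hyt'
  have hdx := lt_of_lt_of_le log32 (DD_ge ht1 (by linarith : 0 < x) hxt')
  have hdy := lt_of_lt_of_le log32 (DD_ge ht1 (by linarith : 0 < y) hyt')
  have lx := log_pos hx
  have ly := log_pos hy
  have he : exp (-(x^2+y^2)/(2*t)) ≤ 1 := by
    apply exp_le_one_iff.2
    apply div_nonpos_of_nonpos_of_nonneg
    · nlinarith [sq_nonneg x, sq_nonneg y]
    · linarith
  calc A^2*K^2/64 * EE t x y = A^2*K^2*t⁻¹*(1/8*(log x * (DD t x)⁻¹))*(1/8*(log y*(DD t y)⁻¹)) * exp (-(x^2+y^2)/(2*t)) := by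
        unfold EE; rw [mul_inv]; ring
    _ ≤ A^2*K^2*t⁻¹*(1/8*(log x * (DD t x)⁻¹))*(1/8*(log y*(DD t y)⁻¹)) * 1 := by gcongr
    _ = A^2*K^2*t⁻¹*(1/8*(log x * (DD t x)⁻¹))*(1/8*(log y*(DD t y)⁻¹)) := by ring
    _ ≤ A^2*K^2*t⁻¹*mm x t*mm y t := by gcongr
    _ ≤ _ := hmain

set_option maxHeartbeats 2000000 in
lemma low3 (H : BesselHK p₁ q) {T : ℝ} (hT : 1 < T) : ∃ c : ℝ, 0 < c ∧ 
    ∀ t x y : ℝ, t ≤ T → 1 < x → 1 < y → x*y ≤ t → c * EE t x y ≤ p₁ t x y := by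
  set L := log (3/2 : ℝ) with hL
  have hL0 : 0 < L := log32
  set G := (2*π*T)^(-(1:ℝ)/2) * T⁻¹ * exp (-T) * (2 / (1+2*T)/T) with hG
  have hT0 : 0 < T := by linarith
  have hG0 : 0 < G := by positivity
  refine ⟨G * L^2, by positivity, ?_⟩
  intro t x y htT hx hy hxy
  have ht1 : 1 < t := by nlinarith
  have ht0 : 0 < t := by linarith
  have hxt : x ≤ t := by nlinarith
  have hyt : y ≤ t := by nlinarith
  have hx0 : 0 < x := by linarith
  have hy0 : 0 < y := by linarith
  have hac := (H.ac ht0 hx hy).1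
  have hdx := DD_ge ht1 (by linarith : 0 < x) hxt
  have hdy := DD_ge ht1 (by linarith : 0 < y) hyt
  have lx := log_pos hx
  have ly := log_pos hy
  have lx' : log x ≤ x - 1 := log_le_sub_one_of_pos hx0
  have ly' : log y ≤ y - 1 := log_le_sub_one_of_pos hy0
  have he : exp (-(x^2+y^2)/(2*t)) ≤ 1 := by
    apply exp_le_one_iff.2
    apply div_nonpos_of_nonpos_of_nonneg
    · nlinarith [sq_nonneg x, sq_nonneg y]
    · linarith
  have hE : L^2 * EE t x y ≤ (x-1)*(y-1) := by
    have hd : L^2 * (DD t x * DD t y)⁻¹ ≤ 1 := by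
      rw [← div_eq_mul_inv, div_le_one (by nlinarith)]; nlinarith
    have hD0 : 0 ≤ L^2 * (DD t x * DD t y)⁻¹ := by
      have : 0 < DD t x := by linarith
      have : 0 < DD t y := by linarith
      positivity
    have hti : t⁻¹ ≤ 1 := inv_le_one_of_one_le₀ ht1.le
    calc L^2 * EE t x y = (log x * log y) * (L^2 * (DD t x * DD t y)⁻¹) * t⁻¹ * exp (-(x^2+y^2)/(2*t)) := by
          unfold EE; ring
      _ ≤ (log x * log y) * 1 * 1 * 1 := by gcongr
      _ = log x * log y := by ring
      _ ≤ _ := by gcongr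
  have hh : G * ((x-1)*(y-1)) ≤ √(x*y) * hker t x y := by
    unfold hker
    set a := 2*(x-1)*(y-1)/t with ha
    have hx1 : 0 < x - 1 := by linarith
    have hy1 : 0 < y - 1 := by linarith
    have ha0 : 0 < a := by positivity
    have e1 : exp (-(x+y-2)^2/(2*t)) = exp (-(x-y)^2/(2*t)) * exp (-a) := by
      rw [← exp_add]; congr 1; rw [ha]; field_simp; ring
    have e2 : a/(1+a) ≤ 1 - exp (-a) := by
      rw [exp_neg]
      have := add_one_le_exp a
      have h2 : (exp a)⁻¹ ≤ (1+a)⁻¹ := by gcongr; linarith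
      have h3 : a/(1+a) = 1 - (1+a)⁻¹ := by field_simp; ring
      linarith
    have haT : a ≤ 2*T := by
      rw [ha, div_le_iff₀ ht0]; nlinarith
    have e3 : 2/(1+2*T)/T * ((x-1)*(y-1)) ≤ a/(1+a) := by
      calc 2/(1+2*T)/T * ((x-1)*(y-1)) = (2*(x-1)*(y-1)/T)/(1+2*T) := by field_simp
        _ ≤ a/(1+a) := by rw [ha]; gcongr
    have e4 : exp (-T) ≤ exp (-(x-y)^2/(2*t)) := by
      apply exp_le_exp.2
      rw [le_div_iff₀ (by positivity)]
      have : (x-y)^2 ≤ t^2 := by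
        apply sq_le_sq'  <;> linarith
      nlinarith
    have e5 : T⁻¹ ≤ (x*y)⁻¹ := by gcongr; linarith
    have e6 : 1 ≤ √(x*y) := by rw [one_le_sqrt]; nlinarith
    have e7 : (2*π*T)^(-(1:ℝ)/2) ≤ (2*π*t)^(-(1:ℝ)/2) := by
      apply rpow_le_rpow_of_nonpos (by positivity) (by gcongr) (by norm_num)
    rw [e1]
    calc G * ((x-1)*(y-1)) = 1 * ((2*π*T)^(-(1:ℝ)/2) * T⁻¹ * (exp (-T) * (2/(1+2*T)/T * ((x-1)*(y-1))))) := by rw [hG]; ring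
      _ ≤ √(x*y) * ((2*π*t)^(-(1:ℝ)/2) * (x*y)⁻¹ * (exp (-(x-y)^2/(2*t)) * (1 - exp (-a)))) := by
        have := e3.trans e2
        gcongr
      _ = _ := by ring
  calc G*L^2*EE t x y = G*(L^2*EE t x y) := by ring
    _ ≤ G * ((x-1)*(y-1)) := by gcongr
    _ ≤ _ := hh
    _ ≤ _ := hac

lemma EE_symm (t x y : ℝ) : EE t x y = EE t y x := by
  unfold EE; rw [mul_comm (DD t x), mul_comm (log x), add_comm (x^2)]

lemma EE_nonneg {t x y : ℝ} (ht : 1 < t) (hx : 1 < x) (hy : 1 < y) (hxt : x ≤ t) (hyt : y ≤ t) : 0 ≤ EE t x y := by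
  have hdx := lt_of_lt_of_le log32 (DD_ge ht (by linarith : 0 < x) hxt)
  have hdy := lt_of_lt_of_le log32 (DD_ge ht (by linarith : 0 < y) hyt)
  have lx := log_pos hx
  have ly := log_pos hy
  unfold EE
  positivity

lemma main_ord (H : BesselHK p₁ q) : ∃ c C : ℝ, 0 < c ∧ c ≤ C ∧ ∀ t x y : ℝ, 1 < x → 1 < y → x*y ≤ t → y ≤ x →
    c * EE t x y ≤ p₁ t x y ∧ p₁ t x y ≤ C * EE t x y := by
  obtain ⟨c', C', hc0, hcC, hS⟩ := H.surv
  have hC0 : 0 ≤ C' := by linarith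
  have hc : ∀ ⦃t x⦄, 0 < t → 1 < x → c' * mm x t ≤ ∫ u in Set.Ioi t, q x u := fun t x ht hx => (hS ht hx).1
  have hC : ∀ ⦃t x⦄, 0 < t → 1 < x → ∫ u in Set.Ioi t, q x u ≤ C' * mm x t := fun t x ht hx => (hS ht hx).2
  set K := exp 9 with hKdef
  have hK : 10 ≤ K := by
    have := add_one_le_exp (9:ℝ); linarith
  have hK2 : 3 * exp 16 ≤ K^2 := by
    rw [hKdef, ← exp_nat_mul, show ((2:ℕ):ℝ)*9 = 2+16 by norm_num, exp_add]
    have := add_one_le_exp (2:ℝ)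
    gcongr; linarith
  obtain ⟨c3, hc3, h3⟩ := low3 H (T := (4*K)^2) (by nlinarith)
  set c1 := ((1/2) * exp (-(4*K^2+1)) * c')^2 * K^2 /64 with hc1
  have hc10 : 0 < c1 := by positivity
  set U1 := 9 * (4 * exp 2 * (3 + 6*C')) * C' * exp 9 with hU1
  set U2 := exp 2 * (1 + 5*C') * 2 with hU2
  set c := min c1 (min (c'/8) c3) with hcdef
  refine ⟨c, max c (max U1 U2), by positivity, le_max_left _ _, ?_⟩
  intro t x y hx hy hxy hyx
  have ht1 : 1 < t := by nlinarith
  have ht0 : 0 < t := by linarith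
  have hxt : x ≤ t := by nlinarith
  have hyt : y ≤ t := by nlinarith
  have hs : √t^2 = t := sq_sqrt ht0.le
  have hys : y ≤ √t := le_sqrt_of_sq_le (by nlinarith)
  have hE := EE_nonneg ht1 hx hy hxt hyt
  have lo : ∀ d, c ≤ d → d * EE t x y ≤ p₁ t x y → c * EE t x y ≤ p₁ t x y := fun d h1 h2 =>
    (mul_le_mul_of_nonneg_right h1 hE).trans h2
  have up : ∀ d, d ≤ max c (max U1 U2) → p₁ t x y ≤ d * EE t x y → p₁ t x y ≤ max c (max U1 U2) * EE t x y := fun d h1 h2 =>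
    h2.trans (mul_le_mul_of_nonneg_right h1 hE)
  rcases le_total x (4*√t) with hx4 | hx4
  · constructor
    · rcases le_total (4*K) (√t) with hk | hk
      · exact lo c1 (min_le_left _ _) (low1 H hc0 hc hK hK2 hx hy hx4 (by linarith) hk)
      · refine lo c3 ((min_le_right _ _).trans (min_le_right _ _)) (h3 t x y ?_ hx hy hxy)
        rw [← hs]; gcongr
    · exact up U1 ((le_max_left _ _).trans (le_max_right _ _)) (up1 H hC0 hC ht1 hx hy hys hx4 hxt)
  · exact ⟨lo (c'/8) ((min_le_right _ _).trans (min_le_left _ _)) (low2 H hc0 hc ht1 hx hy hys hx4 hxy),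
      up U2 ((le_max_right _ _).trans (le_max_right _ _)) (up2 H hC0 hC ht1 hx hy hys hx4 hxy)⟩

end P6sec
end Part6

theorem bessel_heat_kernel_estimate_small (p₁ : ℝ → ℝ → ℝ → ℝ) (q : ℝ → ℝ → ℝ)
    (H : BesselHK p₁ q) :
    ∃ c C : ℝ, 0 < c ∧ c ≤ C ∧ ∀ t x y : ℝ, 0 < t → 1 < x → 1 < y → x*y ≤ t →
      c * (Real.log x * Real.log y *
            (Real.log (3*t/(x + Real.sqrt t)) * Real.log (3*t/(y + Real.sqrt t)))⁻¹ *
            t⁻¹ * Real.exp (-(x^2+y^2)/(2*t))) ≤ p₁ t x y ∧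
      p₁ t x y ≤ C * (Real.log x * Real.log y *
            (Real.log (3*t/(x + Real.sqrt t)) * Real.log (3*t/(y + Real.sqrt t)))⁻¹ *
            t⁻¹ * Real.exp (-(x^2+y^2)/(2*t))) := by
  obtain ⟨c, C, hc, hcC, h⟩ := main_ord H
  refine ⟨c, C, hc, hcC, ?_⟩
  intro t x y ht hx hy hxy
  change c * EE t x y ≤ p₁ t x y ∧ p₁ t x y ≤ C * EE t x y
  rcases le_total y x with hyx | hyx
  · exact h t x y hx hy hxy hyx
  · rw [EE_symm, H.symm ht hx hy]
    exact h t y x hy hx (by linarith) hyx
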